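/- arXiv:1107.4378 — 6 statements merged into one kernel-verified Lean document; each statement's English description precedes it below -/
import Mathlib

section
/- For every vertex v of the random cuckoo graph with n edges on parts of size m, and every natural number k ≥ 1, Pr(C(v) ≥ k) ≤ (n·k/m)^k · (1/k!), where the probability is over the uniform independent choice of the hash values. -/
open Classical

/-- Adjacency: item `x` gives an edge from left vertex `h₀ x` to right vertex `h₁ x`. -/
def cuckooAdj (n m : ℕ) (h₀ h₁ : Fin n → Fin m) (a b : Fin m ⊕ Fin m) : Prop :=
  ∃ x : Fin n, a = Sum.inl (h₀ x) ∧ b = Sum.inr (h₁ x)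

/-- Connectivity in the cuckoo graph: equivalence generated by adjacency. -/
def cuckooConn (n m : ℕ) (h₀ h₁ : Fin n → Fin m) : (Fin m ⊕ Fin m) → (Fin m ⊕ Fin m) → Prop :=
  Relation.EqvGen (cuckooAdj n m h₀ h₁)

/-- `C(v)`: number of edges (items, with multiplicity) in the component of `v`. -/
noncomputable def cuckooC (n m : ℕ) (h₀ h₁ : Fin n → Fin m) (v : Fin m ⊕ Fin m) : ℕ :=
  Nat.card {x : Fin n // cuckooConn n m h₀ h₁ (Sum.inl (h₀ x)) v}

/-- `V(v)`: number of vertices in the component of `v`. -/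
noncomputable def cuckooV (n m : ℕ) (h₀ h₁ : Fin n → Fin m) (v : Fin m ⊕ Fin m) : ℕ :=
  Nat.card {u : Fin m ⊕ Fin m // cuckooConn n m h₀ h₁ u v}

/-- `B_v`: cyclotomic number of the component of `v`, `C(v) − V(v) + 1`. -/
noncomputable def cuckooB (n m : ℕ) (h₀ h₁ : Fin n → Fin m) (v : Fin m ⊕ Fin m) : ℕ :=
  cuckooC n m h₀ h₁ v + 1 - cuckooV n m h₀ h₁ v

/-- The sample space: a pair of hash functions chosen uniformly at random. -/
abbrev HashPair (n m : ℕ) := (Fin n → Fin m) × (Fin n → Fin m)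

/-- Probability of an event under uniformly random hash functions. -/
noncomputable def cuckooPr (n m : ℕ) (E : HashPair n m → Prop) : ℝ :=
  (Nat.card {ω : HashPair n m // E ω} : ℝ) / (Nat.card (HashPair n m) : ℝ)

/-- Expectation of a real random variable under uniformly random hash functions. -/
noncomputable def cuckooE (n m : ℕ) (f : HashPair n m → ℝ) : ℝ :=
  (∑ ω : HashPair n m, f ω) / (Nat.card (HashPair n m) : ℝ)

/-- `X_i`: number of vertices lying in components with exactly `i` edges. -/
noncomputable def cuckooX (n m : ℕ) (h₀ h₁ : Fin n → Fin m) (i : ℕ) : ℕ :=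
  Nat.card {v : Fin m ⊕ Fin m // cuckooC n m h₀ h₁ v = i}

/-- The setoid of connected components. -/
def cuckooSetoid (n m : ℕ) (h₀ h₁ : Fin n → Fin m) : Setoid (Fin m ⊕ Fin m) :=
  ⟨cuckooConn n m h₀ h₁, Relation.EqvGen.is_equivalence _⟩

/-- `ē(G) = ∑_H max(e(H),0)`, the total excess over all components
(`ℕ`-subtraction realizes the `max` with `0`). -/
noncomputable def cuckooEbar (n m : ℕ) (h₀ h₁ : Fin n → Fin m) : ℕ :=
  ∑ᶠ c : Quotient (cuckooSetoid n m h₀ h₁),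
    (Nat.card {x : Fin n // Quotient.mk (cuckooSetoid n m h₀ h₁) (Sum.inl (h₀ x)) = c}
      - Nat.card {u : Fin m ⊕ Fin m // Quotient.mk (cuckooSetoid n m h₀ h₁) u = c})

/-- Endpoint of item `x`: right one if `b`, left one otherwise. -/
def ckEnd {n m : ℕ} (ω : HashPair n m) (x : Fin n) (b : Bool) : Fin m ⊕ Fin m :=
  if b then Sum.inr (ω.2 x) else Sum.inl (ω.1 x)

/-- `p` is a parent function on `S` with orientation `o` and depth `d`. -/
def ckValid {n m : ℕ} (v : Fin m ⊕ Fin m) (S : Finset (Fin n)) (p : Fin n → Option (Fin n))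
    (ω : HashPair n m) (o : Fin n → Bool) (d : Fin n → ℕ) : Prop :=
  ∀ x ∈ S, (p x = none ∧ ckEnd ω x (o x) = v) ∨
    ∃ y ∈ S, p x = some y ∧ d y < d x ∧ ckEnd ω x (o x) = ckEnd ω y (!o y)

theorem ck_exists_edge {n m : ℕ} (v : Fin m ⊕ Fin m) (ω : HashPair n m) (S : Finset (Fin n))
    (R : Set (Fin m ⊕ Fin m)) (hv : v ∈ R) (hS : ∀ x ∈ S, ∀ b, ckEnd ω x b ∈ R)
    (hlt : S.card < cuckooC n m ω.1 ω.2 v) : ∃ x, x ∉ S ∧ ∃ b, ckEnd ω x b ∈ R := by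
  by_contra hcon
  push Not at hcon
  have key : ∀ a b, cuckooConn n m ω.1 ω.2 a b → (a ∈ R ↔ b ∈ R) := by
    intro a b h
    induction h with
    | rel a b h =>
      obtain ⟨x, rfl, rfl⟩ := h
      by_cases hx : x ∈ S
      · have h1 := hS x hx false
        have h2 := hS x hx true
        simp only [ckEnd] at h1 h2
        simp_all
      · have h1 := hcon x hx false
        have h2 := hcon x hx true
        simp only [ckEnd] at h1 h2
        simp_all
    | refl a => rfl
    | symm a b _ ih => exact ih.symm
    | trans a b c _ _ h1 h2 => exact h1.trans h2
  have : cuckooC n m ω.1 ω.2 v ≤ S.card := by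
    unfold cuckooC
    have hcard : Nat.card (S : Set (Fin n)) = S.card := by simp
    rw [← hcard]
    refine Nat.card_le_card_of_injective
      (fun x => (⟨x.1, ?_⟩ : (S : Set (Fin n)))) ?_
    · by_contra hx
      have h1 := hcon x.1 (by simpa using hx) false
      exact h1 (by simpa [ckEnd] using (key _ _ x.2).2 hv)
    · intro a b h
      simpa [Subtype.ext_iff] using h
  omega

theorem ck_exists {n m : ℕ} (v : Fin m ⊕ Fin m) (ω : HashPair n m) (j : ℕ) :
    j ≤ cuckooC n m ω.1 ω.2 v → ∃ (S : Finset (Fin n)) (p : Fin n → Option (Fin n))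
      (o : Fin n → Bool) (d : Fin n → ℕ), S.card = j ∧ (∀ x, x ∉ S → p x = none) ∧
      (∀ x ∈ S, d x < j) ∧ ckValid v S p ω o d := by
  induction j with
  | zero =>
    intro _
    exact ⟨∅, fun _ => none, fun _ => true, fun _ => 0, by simp [ckValid]⟩
  | succ j ih =>
    intro hj
    obtain ⟨S, p, o, d, hc, hp, hd, hval⟩ := ih (by omega)
    obtain ⟨x, hx, b, hb⟩ := ck_exists_edge v ω S
      ({u | u = v ∨ ∃ y ∈ S, u = ckEnd ω y (!o y)}) (Or.inl rfl) (by
        intro x hx b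
        by_cases hbo : b = o x
        · subst hbo
          rcases hval x hx with ⟨_, h⟩ | ⟨y, hy, _, _, h⟩
          · exact Or.inl h
          · exact Or.inr ⟨y, hy, h⟩
        · refine Or.inr ⟨x, hx, ?_⟩
          have : b = !o x := by cases b <;> cases h : o x <;> simp_all
          rw [this]) (by omega)
    have hne : ∀ z ∈ S, z ≠ x := fun z hz h => hx (h ▸ hz)
    have old : ∀ q : Option (Fin n), ∀ z ∈ S,
        (Function.update p x q z = none ∧ ckEnd ω z (Function.update o x b z) = v) ∨
        ∃ y ∈ insert x S, Function.update p x q z = some y ∧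
          Function.update d x j y < Function.update d x j z ∧
          ckEnd ω z (Function.update o x b z) = ckEnd ω y (!Function.update o x b y) := by
      intro q z hz
      rcases hval z hz with h | ⟨y, hy, h1, h2, h3⟩
      · left; simpa [Function.update_of_ne (hne z hz)] using h
      · right
        refine ⟨y, Finset.mem_insert_of_mem hy, ?_⟩
        simpa [Function.update_of_ne (hne z hz), Function.update_of_ne (hne y hy)] using
          ⟨h1, h2, h3⟩
    have main : ∀ q : Option (Fin n), ((q = none ∧ ckEnd ω x b = v) ∨
        ∃ y ∈ S, q = some y ∧ ckEnd ω x b = ckEnd ω y (!o y)) →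
        ∃ (S : Finset (Fin n)) (p : Fin n → Option (Fin n))
      (o : Fin n → Bool) (d : Fin n → ℕ), S.card = j + 1 ∧ (∀ x, x ∉ S → p x = none) ∧
      (∀ x ∈ S, d x < j + 1) ∧ ckValid v S p ω o d := by
      intro q hq
      refine ⟨insert x S, Function.update p x q, Function.update o x b, Function.update d x j,
        by rw [Finset.card_insert_of_notMem hx, hc], ?_, ?_, ?_⟩
      · intro z hz
        simp only [Finset.mem_insert, not_or] at hz
        rw [Function.update_of_ne hz.1]
        exact hp z hz.2
      · intro z hz
        rcases Finset.mem_insert.1 hz with rfl | hz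
        · simp
        · rw [Function.update_of_ne (hne z hz)]
          have := hd z hz
          omega
      · intro z hz
        rcases Finset.mem_insert.1 hz with rfl | hz
        · rcases hq with h | ⟨y, hy, h1, h2⟩
          · left; simpa using h
          · right
            refine ⟨y, Finset.mem_insert_of_mem hy, ?_⟩
            simpa [Function.update_of_ne (hne y hy)] using ⟨h1, hd y hy, h2⟩
        · exact old q z hz
    rcases hb with h | ⟨y, hy, h⟩
    · exact main none (Or.inl ⟨rfl, h⟩)
    · exact main (some y) (Or.inr ⟨y, hy, rfl, h⟩)

theorem ckEnd_inj_side {n m : ℕ} {ω ω' : HashPair n m} {x x' : Fin n} {b b' : Bool}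
    (h : ckEnd ω x b = ckEnd ω' x' b') : b = b' := by
  cases b <;> cases b' <;> simp_all [ckEnd]

/-- The hash values outside the forced ones. -/
def ckCode {n m : ℕ} (S : Finset (Fin n)) (o : Fin n → Bool) (ω : HashPair n m) :
    (Fin n → Fin m) × ({x // x ∉ S} → Fin m) :=
  (fun x => if x ∈ S then (if o x then ω.1 x else ω.2 x) else ω.1 x, fun x => ω.2 x.1)

theorem ckCode_inj {n m : ℕ} (v : Fin m ⊕ Fin m) (S : Finset (Fin n))
    (p : Fin n → Option (Fin n)) (ω ω' : HashPair n m) (o o' : Fin n → Bool) (d d' : Fin n → ℕ)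
    (h : ckValid v S p ω o d) (h' : ckValid v S p ω' o' d')
    (hc : ckCode S o ω = ckCode S o' ω') : ω = ω' := by
  have hc1 := congrArg Prod.fst hc
  have hc2 := congrArg Prod.snd hc
  simp only [ckCode] at hc1 hc2
  have key : ∀ N, ∀ x ∈ S, d x < N → o x = o' x ∧ ω.1 x = ω'.1 x ∧ ω.2 x = ω'.2 x := by
    intro N
    induction N with
    | zero => intro x _ h; omega
    | succ N ih =>
      intro x hx hN
      have e : ckEnd ω x (o x) = ckEnd ω' x (o' x) := by
        rcases h x hx with ⟨h1, h2⟩ | ⟨y, hy, h1, h2, h3⟩ <;>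
        rcases h' x hx with ⟨h1', h2'⟩ | ⟨y', hy', h1', h2', h3'⟩
        · rw [h2, h2']
        · simp [h1] at h1'
        · simp [h1] at h1'
        · rw [h1] at h1'
          obtain rfl : y = y' := by simpa using h1'
          obtain ⟨i1, i2, i3⟩ := ih y hy (by omega)
          rw [h3, h3', ← i1]
          simp [ckEnd, i2, i3]
      have e2 := ckEnd_inj_side e
      have e3 := congrFun hc1 x
      rw [← e2] at e e3
      refine ⟨e2, ?_⟩
      cases ho : o x <;> simp_all [ckEnd]
  refine Prod.ext (funext fun x => ?_) (funext fun x => ?_)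
  · by_cases hx : x ∈ S
    · exact (key _ x hx (Nat.lt_succ_self _)).2.1
    · simpa [hx] using congrFun hc1 x
  · by_cases hx : x ∈ S
    · exact (key _ x hx (Nat.lt_succ_self _)).2.2
    · exact congrFun hc2 ⟨x, hx⟩

theorem ck_fiber {n m : ℕ} (v : Fin m ⊕ Fin m) (S : Finset (Fin n))
    (p : Fin n → Option (Fin n)) :
    (Finset.univ.filter fun ω : HashPair n m => ∃ o d, ckValid v S p ω o d).card
      ≤ m ^ n * m ^ (n - S.card) := by
  have : Fintype.card ((Fin n → Fin m) × ({x // x ∉ S} → Fin m)) = m ^ n * m ^ (n - S.card) := by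
    simp [Fintype.card_subtype_compl]
  rw [← this, ← Finset.card_univ]
  refine Finset.card_le_card_of_injOn
    (fun ω => if h : ∃ o d, ckValid v S p ω o d then ckCode S h.choose ω else ckCode S (fun _ => true) ω)
    (fun _ _ => Finset.mem_coe.2 (Finset.mem_univ _)) ?_
  intro ω hω ω' hω' heq
  have h : ∃ o d, ckValid v S p ω o d := by simpa using hω
  have h' : ∃ o d, ckValid v S p ω' o d := by simpa using hω'
  simp only [dif_pos h, dif_pos h'] at heq
  obtain ⟨d, hd⟩ := h.choose_spec
  obtain ⟨d', hd'⟩ := h'.choose_spec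
  exact ckCode_inj v S p ω ω' _ _ d d' hd hd' heq

/-- Candidate parent functions on `S`. -/
noncomputable def ckPar {n : ℕ} (S : Finset (Fin n)) : Finset (Fin n → Option (Fin n)) :=
  Fintype.piFinset fun x => if x ∈ S then insert none ((S.erase x).image some) else {none}

theorem ckPar_card {n : ℕ} (S : Finset (Fin n)) : (ckPar S).card = S.card ^ S.card := by
  unfold ckPar
  rw [Fintype.card_piFinset]
  have : ∀ x, (if x ∈ S then insert none ((S.erase x).image some) else {none} :
      Finset (Option (Fin n))).card = if x ∈ S then S.card else 1 := by
    intro x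
    split_ifs with hx
    · rw [Finset.card_insert_of_notMem (by simp),
        Finset.card_image_of_injective _ (Option.some_injective _), Finset.card_erase_of_mem hx]
      have := Finset.card_pos.2 ⟨x, hx⟩
      omega
    · simp
  simp only [this]
  rw [Finset.prod_ite]
  simp

theorem ck_count (n m : ℕ) (v : Fin m ⊕ Fin m) (k : ℕ) :
    Nat.card {ω : HashPair n m // k ≤ cuckooC n m ω.1 ω.2 v}
      ≤ n.choose k * (k ^ k * (m ^ n * m ^ (n - k))) := by
  rw [Nat.card_eq_fintype_card, Fintype.card_subtype]
  calc _ ≤ ((Finset.powersetCard k (Finset.univ : Finset (Fin n))).biUnion fun S =>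
        (ckPar S).biUnion fun p =>
          Finset.univ.filter fun ω : HashPair n m => ∃ o d, ckValid v S p ω o d).card := by
        apply Finset.card_le_card
        intro ω hω
        obtain ⟨S, p, o, d, hc, hp, -, hv⟩ := ck_exists v ω k (by simpa using hω)
        simp only [Finset.mem_biUnion, Finset.mem_filter, Finset.mem_univ, true_and]
        refine ⟨S, by simp [hc], p, ?_, o, d, hv⟩
        rw [ckPar, Fintype.mem_piFinset]
        intro x
        by_cases hx : x ∈ S
        · rcases hv x hx with ⟨h, _⟩ | ⟨y, hy, h, hlt, _⟩
          · simp [hx, h]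
          · have : y ≠ x := by rintro rfl; omega
            simp [hx, h, hy, this]
        · simp [hx, hp x hx]
    _ ≤ (Finset.powersetCard k (Finset.univ : Finset (Fin n))).card *
          (k ^ k * (m ^ n * m ^ (n - k))) := by
        apply Finset.card_biUnion_le_card_mul
        intro S hS
        have hS : S.card = k := (Finset.mem_powersetCard.1 hS).2
        have := Finset.card_biUnion_le_card_mul (ckPar S) (fun p =>
          Finset.univ.filter fun ω : HashPair n m => ∃ o d, ckValid v S p ω o d) _
          (fun p _ => ck_fiber v S p)
        rwa [ckPar_card, hS] at this
    _ = _ := by simp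

/-- Lemma (Lemma 1 of the paper): for any vertex `v` of the random cuckoo graph with `n`
edges on parts of size `m`, and any `k ≥ 1`,
`Pr(C(v) ≥ k) ≤ (n·k/m)^k · (1/k!)`. -/
theorem cuckoo_component_size_bound (n m : ℕ) (hn : 0 < n) (hm : 0 < m)
    (v : Fin m ⊕ Fin m) (k : ℕ) (hk : 1 ≤ k) :
    cuckooPr n m (fun ω => k ≤ cuckooC n m ω.1 ω.2 v)
      ≤ ((n : ℝ) * k / m) ^ k * (1 / (Nat.factorial k : ℝ)) := by
  unfold cuckooPr
  have hcount := ck_count n m v k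
  have hm' : (0 : ℝ) < m := by exact_mod_cast hm
  have hf : (0 : ℝ) < Nat.factorial k := by exact_mod_cast Nat.factorial_pos k
  have htot : (Nat.card (HashPair n m) : ℝ) = (m : ℝ) ^ n * (m : ℝ) ^ n := by simp [HashPair]
  rw [htot, div_le_iff₀ (by positivity)]
  by_cases hkn : k ≤ n
  · have h1 : (Nat.card {ω : HashPair n m // k ≤ cuckooC n m ω.1 ω.2 v} : ℝ)
        ≤ (n.choose k : ℝ) * ((k : ℝ) ^ k * ((m : ℝ) ^ n * (m : ℝ) ^ (n - k))) := by
      exact_mod_cast hcount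
    refine h1.trans ?_
    have h2 : (n.choose k : ℝ) ≤ (n : ℝ) ^ k / (Nat.factorial k : ℝ) := Nat.choose_le_pow_div k n
    have h3 : (m : ℝ) ^ n = (m : ℝ) ^ (n - k) * (m : ℝ) ^ k := by
      rw [← pow_add, Nat.sub_add_cancel hkn]
    calc _ ≤ (n : ℝ) ^ k / (Nat.factorial k : ℝ) *
          ((k : ℝ) ^ k * ((m : ℝ) ^ n * (m : ℝ) ^ (n - k))) := by gcongr
      _ = _ := by
        rw [h3, div_pow, mul_pow]
        field_simp
  · rw [Nat.choose_eq_zero_of_lt (by omega), zero_mul] at hcount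
    rw [Nat.le_zero.1 hcount]
    simp only [Nat.cast_zero]
    positivity
end

section
/- Let ε > 0 be a constant and suppose (1+ε)·n ≤ m. Then for every vertex v of the random cuckoo graph with n edges on parts of size m, and all natural numbers t ≥ 1 and k ≥ 1 such that Pr(C(v) = k) > 0, the conditional probability satisfies Pr(B_v ≥ t | C(v) = k) ≤ (3·e⁵·k³/m)^t. -/
open Classical

namespace CuckooAux

/-- The component of `v` as a finset of vertices. -/
noncomputable def comp (n m : ℕ) (h₀ h₁ : Fin n → Fin m) (v : Fin m ⊕ Fin m) :
    Finset (Fin m ⊕ Fin m) := Finset.univ.filter (fun u => cuckooConn n m h₀ h₁ u v)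

lemma mem_comp {n m : ℕ} {h₀ h₁ : Fin n → Fin m} {v u : Fin m ⊕ Fin m} :
    u ∈ comp n m h₀ h₁ v ↔ cuckooConn n m h₀ h₁ u v := by simp [comp]

lemma V_eq {n m : ℕ} {h₀ h₁ : Fin n → Fin m} {v : Fin m ⊕ Fin m} :
    cuckooV n m h₀ h₁ v = (comp n m h₀ h₁ v).card := by
  rw [cuckooV, Nat.card_eq_fintype_card, Fintype.card_subtype, comp]

lemma C_eq {n m : ℕ} {h₀ h₁ : Fin n → Fin m} {v : Fin m ⊕ Fin m} :
    cuckooC n m h₀ h₁ v =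
      (Finset.univ.filter (fun x => Sum.inl (h₀ x) ∈ comp n m h₀ h₁ v)).card := by
  rw [cuckooC, Nat.card_eq_fintype_card, Fintype.card_subtype]
  simp only [mem_comp]

lemma self_mem {n m : ℕ} {h₀ h₁ : Fin n → Fin m} {v : Fin m ⊕ Fin m} :
    v ∈ comp n m h₀ h₁ v := mem_comp.2 (Relation.EqvGen.refl _)

lemma conn_edge {n m : ℕ} (h₀ h₁ : Fin n → Fin m) (x : Fin n) :
    cuckooConn n m h₀ h₁ (Sum.inl (h₀ x)) (Sum.inr (h₁ x)) :=
  Relation.EqvGen.rel _ _ ⟨x, rfl, rfl⟩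

lemma comp_closed {n m : ℕ} {h₀ h₁ : Fin n → Fin m} {v : Fin m ⊕ Fin m} (x : Fin n) :
    Sum.inl (h₀ x) ∈ comp n m h₀ h₁ v ↔ Sum.inr (h₁ x) ∈ comp n m h₀ h₁ v := by
  rw [mem_comp, mem_comp]
  exact ⟨fun h => ((conn_edge h₀ h₁ x).symm _ _).trans _ _ _ h,
    fun h => (conn_edge h₀ h₁ x).trans _ _ _ h⟩

lemma closed_iff {n m : ℕ} {h₀ h₁ : Fin n → Fin m} {K : Set (Fin m ⊕ Fin m)}
    (hK : ∀ x, Sum.inl (h₀ x) ∈ K ↔ Sum.inr (h₁ x) ∈ K) {a b : Fin m ⊕ Fin m}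
    (h : cuckooConn n m h₀ h₁ a b) : a ∈ K ↔ b ∈ K := by
  induction h with
  | rel a b h => obtain ⟨x, rfl, rfl⟩ := h; exact hK x
  | refl => rfl
  | symm _ _ _ ih => exact ih.symm
  | trans _ _ _ _ _ i1 i2 => exact i1.trans i2

lemma comp_unique {n m : ℕ} {h₀ h₁ : Fin n → Fin m} {v : Fin m ⊕ Fin m}
    {K : Finset (Fin m ⊕ Fin m)} (hv : v ∈ K)
    (hK : ∀ x, Sum.inl (h₀ x) ∈ K ↔ Sum.inr (h₁ x) ∈ K)
    (hc : ∀ u ∈ K, cuckooConn n m h₀ h₁ u v) : comp n m h₀ h₁ v = K := by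
  ext u
  rw [mem_comp]
  refine ⟨fun h => ?_, hc u⟩
  have := closed_iff (K := (K : Set _)) (by simpa using hK) h
  simpa [hv] using this

/-- connectivity using only edges in `T` -/
def connT {n m : ℕ} (h₀ h₁ : Fin n → Fin m) (T : Finset (Fin n)) :
    (Fin m ⊕ Fin m) → (Fin m ⊕ Fin m) → Prop :=
  Relation.EqvGen (fun a b => ∃ x ∈ T, a = Sum.inl (h₀ x) ∧ b = Sum.inr (h₁ x))

lemma connT_mono {n m : ℕ} {h₀ h₁ g₀ : Fin n → Fin m} {T T' : Finset (Fin n)}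
    (hT : T ⊆ T') (hg : ∀ x ∈ T, h₀ x = g₀ x) {a b : Fin m ⊕ Fin m}
    (h : connT h₀ h₁ T a b) : connT g₀ h₁ T' a b := by
  refine Relation.EqvGen.mono ?_ _ _ h
  rintro a b ⟨x, hx, rfl, rfl⟩
  exact ⟨x, hT hx, by rw [hg x hx], rfl⟩

lemma connT_conn {n m : ℕ} {h₀ h₁ g₀ : Fin n → Fin m} {T : Finset (Fin n)}
    (hg : ∀ x ∈ T, h₀ x = g₀ x) {a b : Fin m ⊕ Fin m}
    (h : connT h₀ h₁ T a b) : cuckooConn n m g₀ h₁ a b := by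
  refine Relation.EqvGen.mono ?_ _ _ h
  rintro a b ⟨x, hx, rfl, rfl⟩
  exact ⟨x, by rw [hg x hx], rfl⟩

lemma exists_tree {n m : ℕ} (h₀ h₁ : Fin n → Fin m) (v : Fin m ⊕ Fin m) :
    ∃ T : Finset (Fin n), T.card + 1 ≤ (comp n m h₀ h₁ v).card ∧
      ∀ u ∈ comp n m h₀ h₁ v, connT h₀ h₁ T u v := by
  have key : ∀ T : Finset (Fin n),
      T.card + 1 ≤ (Finset.univ.filter (fun u => connT h₀ h₁ T u v)).card →
      ∃ T : Finset (Fin n), T.card + 1 ≤ (comp n m h₀ h₁ v).card ∧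
      ∀ u ∈ comp n m h₀ h₁ v, connT h₀ h₁ T u v := by
    intro T
    induction hd : n - T.card using Nat.strong_induction_on generalizing T with
    | _ d ih =>
    intro hT
    by_cases hcl : ∀ x, connT h₀ h₁ T (Sum.inl (h₀ x)) v ↔ connT h₀ h₁ T (Sum.inr (h₁ x)) v
    · have : comp n m h₀ h₁ v = Finset.univ.filter (fun u => connT h₀ h₁ T u v) := by
        apply comp_unique
        · exact Finset.mem_filter.2 ⟨Finset.mem_univ _, Relation.EqvGen.refl v⟩
        · simpa using hcl
        · intro u hu
          exact connT_conn (fun _ _ => rfl) (by simpa using hu)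
      refine ⟨T, by rw [this]; exact hT, ?_⟩
      intro u hu
      rw [this] at hu
      simpa using hu
    · push Not at hcl
      obtain ⟨x, hx⟩ := hcl
      have hxT : x ∉ T := by
        intro hxT
        have he : connT h₀ h₁ T (Sum.inl (h₀ x)) (Sum.inr (h₁ x)) :=
          Relation.EqvGen.rel _ _ ⟨x, hxT, rfl, rfl⟩
        rcases hx with ⟨h, h'⟩ | ⟨h, h'⟩
        · exact h' ((he.symm _ _).trans _ _ _ h)
        · exact h (he.trans _ _ _ h')
      have hcard : (insert x T).card = T.card + 1 := Finset.card_insert_of_notMem hxT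
      have hle : (insert x T).card ≤ n := by simpa using Finset.card_le_univ (insert x T)
      refine ih (n - (insert x T).card) (by omega) (insert x T) rfl ?_
      rw [hcard]
      refine Nat.succ_le_of_lt (lt_of_le_of_lt hT ?_)
      apply Finset.card_lt_card
      have he : connT h₀ h₁ (insert x T) (Sum.inl (h₀ x)) (Sum.inr (h₁ x)) :=
          Relation.EqvGen.rel _ _ ⟨x, by simp, rfl, rfl⟩
      have hmono : ∀ {a}, connT h₀ h₁ T a v → connT h₀ h₁ (insert x T) a v :=
        fun h => connT_mono (Finset.subset_insert _ _) (fun _ _ => rfl) h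
      rw [Finset.ssubset_iff_of_subset]
      · rcases hx with ⟨h, h'⟩ | ⟨h, h'⟩
        · exact ⟨Sum.inr (h₁ x), Finset.mem_filter.2 ⟨Finset.mem_univ _, (he.symm _ _).trans _ _ _ (hmono h)⟩,
            by simpa using h'⟩
        · exact ⟨Sum.inl (h₀ x), Finset.mem_filter.2 ⟨Finset.mem_univ _, he.trans _ _ _ (hmono h')⟩,
            by simpa using h⟩
      · intro u hu
        simp only [Finset.mem_filter, Finset.mem_univ, true_and] at hu ⊢
        exact hmono hu
  refine key ∅ ?_
  simp only [Finset.card_empty, zero_add]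
  apply Finset.card_pos.2
  exact ⟨v, by simpa [connT] using Relation.EqvGen.refl v⟩

/-- existence of a non-bridge edge -/
lemma exists_nonbridge {n m : ℕ} (h₀ h₁ : Fin n → Fin m) (v : Fin m ⊕ Fin m)
    (h : cuckooV n m h₀ h₁ v ≤ cuckooC n m h₀ h₁ v) :
    ∃ x, Sum.inl (h₀ x) ∈ comp n m h₀ h₁ v ∧
      ∀ g₀ : Fin n → Fin m, (∀ y, y ≠ x → h₀ y = g₀ y) →
      ∀ u ∈ comp n m h₀ h₁ v, cuckooConn n m g₀ h₁ u v := by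
  obtain ⟨T, hT, hc⟩ := exists_tree h₀ h₁ v
  rw [V_eq, C_eq] at h
  have : ∃ x ∈ (Finset.univ.filter (fun x => Sum.inl (h₀ x) ∈ comp n m h₀ h₁ v)), x ∉ T := by
    by_contra hcon
    push Not at hcon
    have := Finset.card_le_card (show _ ⊆ T from hcon)
    omega
  obtain ⟨x, hx, hxT⟩ := this
  refine ⟨x, by simpa using hx, fun g₀ hg u hu => connT_conn (fun y hy => hg y ?_) (hc u hu)⟩
  rintro rfl; exact hxT hy

/-- Moving a non-bridge edge to an isolated vertex. -/
lemma move {n m : ℕ} {h₀ h₁ : Fin n → Fin m} {v : Fin m ⊕ Fin m} {x : Fin n} {u : Fin m}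
    (hx : Sum.inl (h₀ x) ∈ comp n m h₀ h₁ v)
    (hc : ∀ g₀ : Fin n → Fin m, (∀ y, y ≠ x → h₀ y = g₀ y) →
      ∀ u ∈ comp n m h₀ h₁ v, cuckooConn n m g₀ h₁ u v)
    (hu : ∀ y, h₀ y ≠ u) :
    comp n m (Function.update h₀ x u) h₁ v = insert (Sum.inl u) (comp n m h₀ h₁ v) := by
  have hag : ∀ y, y ≠ x → h₀ y = Function.update h₀ x u y := fun y hy => by simp [hy]
  apply comp_unique
  · exact Finset.mem_insert_of_mem self_mem
  · intro y
    by_cases hy : y = x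
    · subst hy
      simpa using comp_closed y |>.1 hx
    · simp [hy, hu y, comp_closed y]
  · intro w hw
    rcases Finset.mem_insert.1 hw with rfl | hw
    · have := conn_edge (Function.update h₀ x u) h₁ x
      rw [Function.update_self] at this
      exact this.trans _ _ _ (hc _ hag _ ((comp_closed x).1 hx))
    · exact hc _ hag _ hw

/-- Changing the outside edges. -/
lemma outside {n m : ℕ} {h₀ h₁ g₀ : Fin n → Fin m} {v : Fin m ⊕ Fin m}
    (h1 : ∀ x, Sum.inr (h₁ x) ∈ comp n m h₀ h₁ v → g₀ x = h₀ x)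
    (h2 : ∀ x, Sum.inr (h₁ x) ∉ comp n m h₀ h₁ v → Sum.inl (g₀ x) ∉ comp n m h₀ h₁ v) :
    comp n m g₀ h₁ v = comp n m h₀ h₁ v := by
  obtain ⟨T, hT, hc⟩ := exists_tree h₀ h₁ v
  apply comp_unique self_mem
  · intro x
    by_cases hx : Sum.inr (h₁ x) ∈ comp n m h₀ h₁ v
    · rw [h1 x hx]; exact comp_closed x
    · simp [hx, h2 x hx]
  · have key : ∀ a b, cuckooConn n m h₀ h₁ a b → a ∈ comp n m h₀ h₁ v →
        cuckooConn n m g₀ h₁ a b := by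
      intro a b h
      have hiff : ∀ a b, cuckooConn n m h₀ h₁ a b →
          (a ∈ comp n m h₀ h₁ v ↔ b ∈ comp n m h₀ h₁ v) := fun a b h =>
        closed_iff (K := (comp n m h₀ h₁ v : Set _)) (fun x => by simpa using comp_closed x) h
      induction h with
      | rel a b h =>
        obtain ⟨x, rfl, rfl⟩ := h
        intro ha
        rw [← h1 x ((comp_closed x).1 ha)]
        exact conn_edge _ _ _
      | refl => intro _; exact Relation.EqvGen.refl _
      | symm a b h ih => intro ha; exact (ih ((hiff _ _ h).2 ha)).symm _ _
      | trans a b c h h' i1 i2 =>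
        intro ha; exact (i1 ha).trans _ _ _ (i2 ((hiff _ _ h).1 ha))
    intro u hu
    exact key u v (mem_comp.1 hu) hu

/-- The event as finset. -/
noncomputable def F (n m k t : ℕ) (v : Fin m ⊕ Fin m) : Finset (HashPair n m) :=
  Finset.univ.filter (fun ω => t ≤ cuckooB n m ω.1 ω.2 v ∧ cuckooC n m ω.1 ω.2 v = k)

lemma fiber_bound {α β : Type*} [DecidableEq β] (s : Finset α) (p : α → Prop)
    [DecidablePred p] (f : α → β) (c : ℝ)
    (h : ∀ a ∈ s, ((s.filter (fun b => f b = f a)).card : ℝ) ≤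
      c * (((s.filter p).filter (fun b => f b = f a)).card : ℝ)) :
    (s.card : ℝ) ≤ c * ((s.filter p).card : ℝ) := by
  have e1 := Finset.card_eq_sum_card_image f s
  have e2 : (s.filter p).card = ∑ b ∈ s.image f, ((s.filter p).filter (fun a => f a = b)).card :=
    Finset.card_eq_sum_card_fiberwise (fun a ha =>
      Finset.mem_coe.2 (Finset.mem_image_of_mem f (Finset.mem_filter.1 (Finset.mem_coe.1 ha)).1))
  rw [e1, e2]
  push_cast
  rw [Finset.mul_sum]
  apply Finset.sum_le_sum
  intro b hb
  obtain ⟨a, ha, rfl⟩ := Finset.mem_image.1 hb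
  exact h a ha

lemma pow_bound (r s : ℕ) (h : s ≤ r) : ((r + 1 : ℕ) : ℝ) ^ s ≤ Real.exp 1 * (r : ℝ) ^ s := by
  rcases Nat.eq_zero_or_pos r with rfl | hr
  · obtain rfl : s = 0 := by omega
    simpa using (Real.one_le_exp (zero_le_one))
  · have hr' : (0 : ℝ) < r := by exact_mod_cast hr
    have h1 : ((r + 1 : ℕ) : ℝ) = (1 + 1 / r) * r := by push_cast; field_simp
    rw [h1, mul_pow]
    apply mul_le_mul_of_nonneg_right _ (by positivity)
    calc (1 + 1 / (r : ℝ)) ^ s ≤ (Real.exp (1 / r)) ^ s := by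
          apply pow_le_pow_left₀ (by positivity)
          linarith [Real.add_one_le_exp (1 / (r : ℝ))]
      _ = Real.exp (s * (1 / r)) := by rw [← Real.exp_nat_mul]
      _ ≤ Real.exp 1 := by
          apply Real.exp_le_exp.2
          have : (s : ℝ) ≤ r := by exact_mod_cast h
          rw [mul_one_div, div_le_one hr']; exact this

/-- Left vertices of the component. -/
noncomputable def lft (n m : ℕ) (h₀ h₁ : Fin n → Fin m) (v : Fin m ⊕ Fin m) : Finset (Fin m) :=
  Finset.univ.filter (fun a => Sum.inl a ∈ comp n m h₀ h₁ v)

lemma lft_card {n m : ℕ} {h₀ h₁ : Fin n → Fin m} {v : Fin m ⊕ Fin m} :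
    (lft n m h₀ h₁ v).card ≤ (comp n m h₀ h₁ v).card := by
  apply Finset.card_le_card_of_injOn Sum.inl
  · intro a ha; simpa [lft] using ha
  · exact Sum.inl_injective.injOn

lemma F_V {n m k t : ℕ} {v : Fin m ⊕ Fin m} {ω : HashPair n m} (h : ω ∈ F n m k (t+1) v) :
    (comp n m ω.1 ω.2 v).card ≤ k := by
  simp only [F, Finset.mem_filter, cuckooB, V_eq] at h
  omega

/-- Isolating a fixed vertex costs at most a factor `e`. -/
lemma isolate {n m k t : ℕ} (hnm : n < m) (v : Fin m ⊕ Fin m) (u : Fin m) :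
    (((F n m k (t+1) v).filter (fun ω => u ∉ lft n m ω.1 ω.2 v)).card : ℝ) ≤ Real.exp 1 *
    ((((F n m k (t+1) v).filter (fun ω => u ∉ lft n m ω.1 ω.2 v)).filter
      (fun ω => ∀ y, ω.1 y ≠ u)).card : ℝ) := by
  apply fiber_bound ((F n m k (t+1) v).filter (fun ω => u ∉ lft n m ω.1 ω.2 v))
    (fun ω => ∀ y, ω.1 y ≠ u) (fun ω => (comp n m ω.1 ω.2 v, ω.2,
    fun x => if Sum.inr (ω.2 x) ∈ comp n m ω.1 ω.2 v then some (ω.1 x) else none))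
  rintro ⟨h₀, h₁⟩ hω
  set s := (F n m k (t+1) v).filter (fun ω => u ∉ lft n m ω.1 ω.2 v) with hs
  set K := comp n m h₀ h₁ v with hK
  set A := lft n m h₀ h₁ v with hA
  have hF := (Finset.mem_filter.1 hω).1
  have huA : u ∉ A := (Finset.mem_filter.1 hω).2
  have hAk : A.card ≤ k := lft_card.trans (F_V hF)
  have hC : (Finset.univ.filter (fun x => Sum.inr (h₁ x) ∈ K)).card = k := by
    have := (Finset.mem_filter.1 hF).2.2
    rw [C_eq] at this
    rw [← this]
    congr 1
    ext x
    simp only [Finset.mem_filter, Finset.mem_univ, true_and]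
    exact (comp_closed x).symm
  have hcompl : (Finset.univ.filter (fun x => ¬ Sum.inr (h₁ x) ∈ K)).card = n - k := by
    have := Finset.card_filter_add_card_filter_not (s := (Finset.univ : Finset (Fin n)))
      (fun x => Sum.inr (h₁ x) ∈ K)
    rw [Finset.card_univ, Fintype.card_fin] at this
    omega
  have hkn : k ≤ n := by
    rw [← hC]; simpa using Finset.card_le_univ (Finset.univ.filter (fun x => Sum.inr (h₁ x) ∈ K))
  have hprod : ∀ D : Finset (Fin m), (Fintype.piFinset
      (fun x => if Sum.inr (h₁ x) ∈ K then {h₀ x} else D)).card = D.card ^ (n - k) := by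
    intro D
    rw [Fintype.card_piFinset, ← hcompl, ← Finset.prod_const, Finset.prod_filter]
    apply Finset.prod_congr rfl
    intro x _
    by_cases hx : Sum.inr (h₁ x) ∈ K <;> simp [hx]
  have hmem : ∀ g₀ : Fin n → Fin m, g₀ ∈ Fintype.piFinset
      (fun x => if Sum.inr (h₁ x) ∈ K then {h₀ x} else (Aᶜ).erase u) →
      (∀ x, Sum.inr (h₁ x) ∈ K → g₀ x = h₀ x) ∧
      (∀ x, Sum.inr (h₁ x) ∉ K → g₀ x ≠ u ∧ Sum.inl (g₀ x) ∉ K) := by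
    intro g₀ hg
    rw [Fintype.mem_piFinset] at hg
    refine ⟨fun x hx => by simpa [hx] using hg x, fun x hx => ?_⟩
    have := hg x
    simpa [hx, hA, lft] using this
  have up : (s.filter (fun b => (comp n m b.1 b.2 v, b.2,
      fun x => if Sum.inr (b.2 x) ∈ comp n m b.1 b.2 v then some (b.1 x) else none) =
      (K, h₁, fun x => if Sum.inr (h₁ x) ∈ K then some (h₀ x) else none))).card
      ≤ (Aᶜ).card ^ (n - k) := by
    rw [← hprod]
    apply Finset.card_le_card_of_injOn Prod.fst
    · rintro ⟨g₀, g₁⟩ hg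
      rw [Finset.mem_coe, Finset.mem_filter] at hg
      obtain ⟨hgs, hg⟩ := hg
      simp only [Prod.mk.injEq] at hg
      obtain ⟨e1, rfl, e3⟩ := hg
      rw [e1] at e3
      rw [Finset.mem_coe, Fintype.mem_piFinset]
      intro x
      have e3x := congrFun e3 x
      by_cases hx : Sum.inr (g₁ x) ∈ K
      · simpa [hx] using e3x
      · have : Sum.inl (g₀ x) ∉ K := by
          rw [← e1] at hx ⊢
          rwa [comp_closed]
        simpa [hx, hA, lft] using this
    · rintro ⟨g₀, g₁⟩ hg ⟨g₀', g₁'⟩ hg' h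
      simp only [Finset.mem_coe, Finset.mem_filter, Prod.mk.injEq] at hg hg'
      simp only at h
      rw [h, hg.2.2.1, hg'.2.2.1]
  have low : ((Aᶜ).erase u).card ^ (n - k) ≤
      ((s.filter (fun ω => ∀ y, ω.1 y ≠ u)).filter (fun b => (comp n m b.1 b.2 v, b.2,
      fun x => if Sum.inr (b.2 x) ∈ comp n m b.1 b.2 v then some (b.1 x) else none) =
      (K, h₁, fun x => if Sum.inr (h₁ x) ∈ K then some (h₀ x) else none))).card := by
    rw [← hprod]
    apply Finset.card_le_card_of_injOn (fun g₀ => (g₀, h₁))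
    · intro g₀ hg
      obtain ⟨p1, p2⟩ := hmem g₀ hg
      have hcomp : comp n m g₀ h₁ v = K := outside p1 (fun x hx => (p2 x hx).2)
      have hCg : cuckooC n m g₀ h₁ v = k := by
        rw [C_eq, ← hC]
        congr 1
        ext x
        simp only [Finset.mem_filter, Finset.mem_univ, true_and]
        rw [comp_closed, hcomp]
      have hV : cuckooV n m g₀ h₁ v = cuckooV n m h₀ h₁ v := by
        rw [V_eq, V_eq, hcomp]
      have hF2 := (Finset.mem_filter.1 hF).2
      simp only [cuckooB] at hF2
      rw [Finset.mem_coe, Finset.mem_filter, Finset.mem_filter, hs, Finset.mem_filter]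
      refine ⟨⟨⟨?_, ?_⟩, ?_⟩, ?_⟩
      · refine Finset.mem_filter.2 ⟨Finset.mem_univ _, ?_, hCg⟩
        have hF1 := hF2.1
        rw [hF2.2, ← hV, ← hCg] at hF1
        exact hF1
      · simpa [hA, lft, hcomp] using huA
      · intro y hy
        by_cases hx : Sum.inr (h₁ y) ∈ K
        · have := (comp_closed (h₀ := h₀) (h₁ := h₁) (v := v) y).2 hx
          rw [← p1 y hx] at this
          simp only at hy
          rw [hy] at this
          exact huA (by simpa [hA, lft] using this)
        · exact (p2 y hx).1 hy
      · simp only [hcomp, Prod.mk.injEq, true_and]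
        funext x
        by_cases hx : Sum.inr (h₁ x) ∈ K
        · simp [hx, p1 x hx]
        · simp [hx]
    · intro a _ b _ h
      exact (Prod.mk.inj h).1
  have hc1 : (Aᶜ).card = m - A.card := by rw [Finset.card_compl, Fintype.card_fin]
  have hc2 : ((Aᶜ).erase u).card = m - A.card - 1 := by
    rw [Finset.card_erase_of_mem (by simpa using huA), hc1]
  have hb := pow_bound (m - A.card - 1) (n - k) (by omega)
  rw [show m - A.card - 1 + 1 = m - A.card by omega] at hb
  rw [hc1] at up
  rw [hc2] at low
  have up' := (Nat.cast_le (α := ℝ)).2 up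
  have low' := (Nat.cast_le (α := ℝ)).2 low
  push_cast [Nat.cast_pow] at up' low'
  refine up'.trans (hb.trans ?_)
  exact mul_le_mul_of_nonneg_left low' (Real.exp_pos 1).le

/-- The switching: number of pairs is bounded. -/
lemma switch {n m k t : ℕ} (hn : 0 < n) (v : Fin m ⊕ Fin m) :
    ∑ u : Fin m, (((F n m k (t+1) v).filter (fun ω => u ∉ lft n m ω.1 ω.2 v)).filter
      (fun ω => ∀ y, ω.1 y ≠ u)).card ≤ (k + 1) ^ 2 * (F n m k t v).card := by
  have hnb : ∀ ω : HashPair n m, ∃ x, ω ∈ F n m k (t+1) v →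
      Sum.inl (ω.1 x) ∈ comp n m ω.1 ω.2 v ∧
      ∀ g₀ : Fin n → Fin m, (∀ y, y ≠ x → ω.1 y = g₀ y) →
      ∀ u ∈ comp n m ω.1 ω.2 v, cuckooConn n m g₀ ω.2 u v := by
    intro ω
    by_cases hω : ω ∈ F n m k (t+1) v
    · obtain ⟨x, hx⟩ := exists_nonbridge ω.1 ω.2 v (by
        have := F_V hω
        rw [V_eq, (Finset.mem_filter.1 hω).2.2]; exact this)
      exact ⟨x, fun _ => hx⟩
    · exact ⟨⟨0, hn⟩, fun h => absurd h hω⟩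
  choose X hX using hnb
  rw [← Finset.card_sigma]
  have hT : (((F n m k t v).filter (fun ω => (comp n m ω.1 ω.2 v).card ≤ k + 1)).sigma
      (fun ω => lft n m ω.1 ω.2 v ×ˢ lft n m ω.1 ω.2 v)).card ≤
      (k + 1) ^ 2 * (F n m k t v).card := by
    rw [Finset.card_sigma]
    refine (Finset.sum_le_card_nsmul _ _ ((k+1)^2) ?_).trans ?_
    · intro ω hω
      rw [Finset.card_product, sq]
      have := lft_card.trans (Finset.mem_filter.1 hω).2
      exact Nat.mul_le_mul this this
    · rw [smul_eq_mul, mul_comm]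
      exact Nat.mul_le_mul_left _ (Finset.card_filter_le _ _)
  refine le_trans ?_ hT
  apply Finset.card_le_card_of_injOn
    (fun p => ⟨(Function.update p.2.1 (X p.2) p.1, p.2.2), (p.1, p.2.1 (X p.2))⟩)
  · rintro ⟨u, ω⟩ hp
    simp only [Finset.coe_sigma, Set.mem_sigma_iff, Finset.mem_coe, Finset.mem_filter,
      Finset.mem_univ, true_and] at hp
    obtain ⟨⟨hF, hu⟩, hiso⟩ := hp
    obtain ⟨hx, hc⟩ := hX ω hF
    have hcomp := move hx hc hiso
    have huK : Sum.inl u ∉ comp n m ω.1 ω.2 v := by simpa [lft] using hu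
    have hcard := Finset.card_insert_of_notMem huK
    rw [← hcomp] at hcard
    have hVk := F_V hF
    have hF2 := (Finset.mem_filter.1 hF).2
    have hC : cuckooC n m (Function.update ω.1 (X ω) u) ω.2 v = k := by
      rw [← hF2.2, C_eq, C_eq]
      congr 1
      ext y
      simp only [Finset.mem_filter, Finset.mem_univ, true_and]
      rw [hcomp]
      by_cases hy : y = X ω
      · subst hy; simp [hx]
      · simp [hy, hiso y]
    simp only [cuckooB, V_eq] at hF2
    simp only [Finset.coe_sigma, Set.mem_sigma_iff, Finset.mem_coe, Finset.mem_filter,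
      Finset.mem_product]
    refine ⟨⟨?_, by omega⟩, ?_, ?_⟩
    · simp only [F, Finset.mem_filter, Finset.mem_univ, true_and, cuckooB, V_eq, hC, hcard]
      exact ⟨by omega, trivial⟩
    · simp [lft, hcomp]
    · simp only [lft, Finset.mem_filter, Finset.mem_univ, true_and]
      rw [hcomp]
      exact Finset.mem_insert_of_mem hx
  · rintro ⟨u, ω⟩ hp ⟨u', ω'⟩ hp' h
    simp only [Finset.coe_sigma, Set.mem_sigma_iff, Finset.mem_coe, Finset.mem_filter,
      Finset.mem_univ, true_and] at hp hp'
    simp only [Sigma.mk.injEq, Prod.mk.injEq, heq_eq_eq] at h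
    obtain ⟨⟨h1, h2⟩, rfl, h3⟩ := h
    have hXX : X ω = X ω' := by
      by_contra hne
      have := congrFun h1 (X ω)
      rw [Function.update_self, Function.update_of_ne hne] at this
      exact hp'.2 _ this.symm
    have h0 : ω.1 = ω'.1 := by
      funext y
      by_cases hy : y = X ω
      · rw [hy, h3, hXX]
      · have := congrFun h1 y
        rwa [Function.update_of_ne hy, Function.update_of_ne (hXX ▸ hy)] at this
    have : ω = ω' := Prod.ext h0 h2
    rw [this]

lemma step {n m k t : ℕ} (hn : 0 < n) (hnm : n < m) (v : Fin m ⊕ Fin m) :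
    ((m : ℝ) - k) * ((F n m k (t+1) v).card : ℝ) ≤
      Real.exp 1 * ((k + 1) ^ 2 * ((F n m k t v).card : ℝ)) := by
  have h1 : ((m : ℝ) - k) * ((F n m k (t+1) v).card : ℝ) ≤
      ∑ u : Fin m, (((F n m k (t+1) v).filter (fun ω => u ∉ lft n m ω.1 ω.2 v)).card : ℝ) := by
    have : ∑ u : Fin m, (((F n m k (t+1) v).filter (fun ω => u ∉ lft n m ω.1 ω.2 v)).card : ℝ)
        = ∑ ω ∈ F n m k (t+1) v, (((lft n m ω.1 ω.2 v)ᶜ).card : ℝ) := by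
      have := Finset.sum_card_bipartiteAbove_eq_sum_card_bipartiteBelow
        (s := (Finset.univ : Finset (Fin m))) (t := F n m k (t+1) v)
        (fun u ω => u ∉ lft n m ω.1 ω.2 v)
      simp only [Finset.bipartiteAbove, Finset.bipartiteBelow] at this
      have h' := congrArg (Nat.cast (R := ℝ)) this
      push_cast at h'
      rw [h']
      apply Finset.sum_congr rfl
      intro ω _
      congr 2
      ext u
      simp
    rw [this, mul_comm, ← nsmul_eq_mul]
    apply Finset.card_nsmul_le_sum
    intro ω hω
    have h2 := lft_card.trans (F_V hω)
    have h3 : (lft n m ω.1 ω.2 v).card ≤ m := by simpa using Finset.card_le_univ (lft n m ω.1 ω.2 v)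
    rw [Finset.card_compl, Fintype.card_fin, Nat.cast_sub h3]
    have : ((lft n m ω.1 ω.2 v).card : ℝ) ≤ k := by exact_mod_cast h2
    linarith
  refine h1.trans ((Finset.sum_le_sum (fun u _ => isolate hnm v u)).trans ?_)
  rw [← Finset.mul_sum]
  apply mul_le_mul_of_nonneg_left _ (Real.exp_pos 1).le
  exact_mod_cast switch hn v

end CuckooAux

/-- Lemma (Kirsch–Mitzenmacher–Wieder): if `(1+ε)·n ≤ m` for a constant `ε > 0`, then for
every vertex `v` and all `t ≥ 1`, `k ≥ 1` with `Pr(C(v) = k) > 0`,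
`Pr(B_v ≥ t | C(v) = k) ≤ (3·e⁵·k³/m)^t`. -/
theorem cuckoo_cyclotomic_conditional_bound (ε : ℝ) (hε : 0 < ε) (n m : ℕ)
    (hn : 0 < n) (hm : 0 < m) (hnm : (1 + ε) * n ≤ m)
    (v : Fin m ⊕ Fin m) (t k : ℕ) (ht : 1 ≤ t) (hk : 1 ≤ k)
    (hpos : 0 < cuckooPr n m (fun ω => cuckooC n m ω.1 ω.2 v = k)) :
    cuckooPr n m (fun ω => t ≤ cuckooB n m ω.1 ω.2 v ∧ cuckooC n m ω.1 ω.2 v = k) /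
        cuckooPr n m (fun ω => cuckooC n m ω.1 ω.2 v = k)
      ≤ (3 * Real.exp 1 ^ 5 * (k : ℝ) ^ 3 / m) ^ t := by
  have hn' : (0 : ℝ) < n := by exact_mod_cast hn
  have hm' : (0 : ℝ) < m := by exact_mod_cast hm
  have hk' : (1 : ℝ) ≤ k := by exact_mod_cast hk
  have hlt : n < m := by
    have : (n : ℝ) < m := by nlinarith
    exact_mod_cast this
  have he1 : (1 : ℝ) ≤ Real.exp 1 := Real.one_le_exp zero_le_one
  have he2 : (2 : ℝ) ≤ Real.exp 1 := by linarith [Real.add_one_le_exp (1 : ℝ)]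
  have he5 : 16 * Real.exp 1 ≤ Real.exp 1 ^ 5 := by
    have h4 : (2 : ℝ) ^ 4 ≤ Real.exp 1 ^ 4 := pow_le_pow_left₀ (by norm_num) he2 4
    have : Real.exp 1 ^ 5 = Real.exp 1 ^ 4 * Real.exp 1 := by ring
    rw [this]
    exact mul_le_mul_of_nonneg_right (by linarith) (by linarith)
  set ρ : ℝ := 3 * Real.exp 1 ^ 5 * (k : ℝ) ^ 3 / m with hρ
  have hρ0 : 0 ≤ ρ := by positivity
  have hPr : ∀ s : ℕ, cuckooPr n m (fun ω => s ≤ cuckooB n m ω.1 ω.2 v ∧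
      cuckooC n m ω.1 ω.2 v = k) =
      ((CuckooAux.F n m k s v).card : ℝ) / (Nat.card (HashPair n m) : ℝ) := by
    intro s
    rw [cuckooPr]
    congr 2
    rw [Nat.card_eq_fintype_card, Fintype.card_subtype, CuckooAux.F]
  have hPr0 : cuckooPr n m (fun ω => cuckooC n m ω.1 ω.2 v = k) =
      ((CuckooAux.F n m k 0 v).card : ℝ) / (Nat.card (HashPair n m) : ℝ) := by
    rw [← hPr 0]
    congr 1
    funext ω
    simp
  have hstep : ∀ s : ℕ, ((CuckooAux.F n m k (s+1) v).card : ℝ) ≤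
      ρ * ((CuckooAux.F n m k s v).card : ℝ) := by
    intro s
    have hsub : ((CuckooAux.F n m k (s+1) v).card : ℝ) ≤ ((CuckooAux.F n m k s v).card : ℝ) := by
      have : CuckooAux.F n m k (s+1) v ⊆ CuckooAux.F n m k s v := by
        intro ω h
        simp only [CuckooAux.F, Finset.mem_filter, Finset.mem_univ, true_and] at h ⊢
        exact ⟨by omega, h.2⟩
      exact_mod_cast Finset.card_le_card this
    have hf0 : (0 : ℝ) ≤ ((CuckooAux.F n m k s v).card : ℝ) := Nat.cast_nonneg _
    have hk3 : (k : ℝ) ≤ (k : ℝ) ^ 3 := le_self_pow₀ hk' (by norm_num)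
    have hk23 : (k : ℝ) ^ 2 ≤ (k : ℝ) ^ 3 := pow_le_pow_right₀ hk' (by norm_num)
    by_cases hbig : (m : ℝ) ≤ 2 * k
    · have : 1 ≤ ρ := by
        rw [hρ, le_div_iff₀ hm']
        have : 32 * (k : ℝ) ^ 3 ≤ Real.exp 1 ^ 5 * (k : ℝ) ^ 3 :=
          mul_le_mul_of_nonneg_right (by linarith) (by positivity)
        nlinarith
      nlinarith
    · push Not at hbig
      have hs := CuckooAux.step (k := k) (t := s) hn hlt v
      have h1 : (m : ℝ) / 2 * ((CuckooAux.F n m k (s+1) v).card : ℝ) ≤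
          ((m : ℝ) - k) * ((CuckooAux.F n m k (s+1) v).card : ℝ) :=
        mul_le_mul_of_nonneg_right (by linarith) (Nat.cast_nonneg _)
      have h2 : Real.exp 1 * (((k : ℝ) + 1) ^ 2 * ((CuckooAux.F n m k s v).card : ℝ)) ≤
          (3 / 2 * Real.exp 1 ^ 5 * (k : ℝ) ^ 3) * ((CuckooAux.F n m k s v).card : ℝ) := by
        rw [← mul_assoc]
        apply mul_le_mul_of_nonneg_right _ hf0
        have h3 : ((k : ℝ) + 1) ^ 2 ≤ 4 * (k : ℝ) ^ 3 := by nlinarith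
        calc Real.exp 1 * ((k : ℝ) + 1) ^ 2 ≤ Real.exp 1 * (4 * (k : ℝ) ^ 3) :=
              mul_le_mul_of_nonneg_left h3 (by linarith)
          _ = (4 * Real.exp 1) * (k : ℝ) ^ 3 := by ring
          _ ≤ _ := mul_le_mul_of_nonneg_right (by linarith) (by positivity)
      rw [hρ, div_mul_eq_mul_div, le_div_iff₀ hm']
      linarith
  have hall : ∀ s : ℕ, ((CuckooAux.F n m k s v).card : ℝ) ≤
      ρ ^ s * ((CuckooAux.F n m k 0 v).card : ℝ) := by
    intro s
    induction s with
    | zero => simp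
    | succ s ih =>
      refine (hstep s).trans ?_
      rw [pow_succ', mul_assoc]
      exact mul_le_mul_of_nonneg_left ih hρ0
  rw [div_le_iff₀ hpos, hPr, hPr0, ← mul_div_assoc]
  exact div_le_div_of_nonneg_right (hall t) (Nat.cast_nonneg _)
end

section
/- There exist a constant c > 0 and a threshold m₀ such that the following holds for all m ≥ m₀. Let m' = ⌈m^{2/3}⌉ and let n' be a positive integer with n' ≤ 2·m^{1/3}. Then for the random cuckoo graph with n' edges on parts of size m', for every natural number k with 1 ≤ k ≤ m^{1/4} and every vertex v, Pr(C(v) ≥ k) ≤ m^{−c·k}. -/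
open Classical

/-- Reading off the value of a link on the left side. -/
def linkL {n m : ℕ} (v : Fin m ⊕ Fin m) (h : Fin n → Fin m) : Option (Fin n) → Fin m ⊕ Fin m
  | none => v
  | some y => Sum.inl (h y)

/-- Reading off the value of a link on the right side. -/
def linkR {n m : ℕ} (v : Fin m ⊕ Fin m) (h : Fin n → Fin m) : Option (Fin n) → Fin m ⊕ Fin m
  | none => v
  | some y => Sum.inr (h y)

/-- A list of distinct edges, each touching `v` or an edge later in the list. -/
def GoodList {n m : ℕ} (v : Fin m ⊕ Fin m) (ω : HashPair n m) : List (Fin n) → Prop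
  | [] => True
  | x :: L => x ∉ L ∧ GoodList v ω L ∧
      ∃ o ∈ (none :: L.map some : List (Option (Fin n))),
        (Sum.inl (ω.1 x) = linkL v ω.1 o ∨ Sum.inr (ω.2 x) = linkR v ω.2 o)

theorem count_update {Ω V : Type*} [Fintype Ω] {m : ℕ} (get : Ω → Fin m) (upd : Ω → Fin m → Ω)
    (h1 : ∀ ω a, get (upd ω a) = a) (h2 : ∀ ω a b, upd (upd ω a) b = upd ω b)
    (h3 : ∀ ω, upd ω (get ω) = ω) (P : Ω → Prop) (hP : ∀ ω a, P ω → P (upd ω a))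
    (g : Ω → V) (hg : ∀ ω a, g (upd ω a) = g ω) (i : Fin m → V) (hi : Function.Injective i) :
    (Finset.univ.filter fun ω => P ω ∧ i (get ω) = g ω).card * m
      ≤ (Finset.univ.filter fun ω => P ω).card := by
  have key : ((Finset.univ.filter fun ω => P ω ∧ i (get ω) = g ω) ×ˢ
      (Finset.univ : Finset (Fin m))).card ≤ (Finset.univ.filter fun ω => P ω).card := by
    apply Finset.card_le_card_of_injOn (fun p => upd p.1 p.2)
    · rintro ⟨ω, a⟩ h
      simp at h ⊢
      exact hP _ _ h.1
    · rintro ⟨ω, a⟩ h ⟨ω', a'⟩ h' e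
      simp at h h' e
      have ha : a = a' := by rw [← h1 ω a, e, h1]
      have hgg : g ω = g ω' := by rw [← hg ω a, e, hg]
      have hget : get ω = get ω' := hi (by rw [h.2, h'.2, hgg])
      have : ω = ω' := by rw [← h3 ω, ← h2 ω a, e, h2, hget, h3]
      rw [this, ha]
  simpa [Finset.card_product] using key

theorem linkL_update {n m : ℕ} (v : Fin m ⊕ Fin m) (h : Fin n → Fin m) (x : Fin n) (a : Fin m)
    (L : List (Fin n)) (hx : x ∉ L) (o : Option (Fin n))
    (ho : o ∈ (none :: L.map some : List (Option (Fin n)))) :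
    linkL v (Function.update h x a) o = linkL v h o := by
  rcases o with _ | y
  · rfl
  · have : y ≠ x := by rintro rfl; simp at ho; exact hx ho
    simp [linkL, this]

theorem linkR_update {n m : ℕ} (v : Fin m ⊕ Fin m) (h : Fin n → Fin m) (x : Fin n) (a : Fin m)
    (L : List (Fin n)) (hx : x ∉ L) (o : Option (Fin n))
    (ho : o ∈ (none :: L.map some : List (Option (Fin n)))) :
    linkR v (Function.update h x a) o = linkR v h o := by
  rcases o with _ | y
  · rfl
  · have : y ≠ x := by rintro rfl; simp at ho; exact hx ho
    simp [linkR, this]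

theorem good_congr {n m : ℕ} (v : Fin m ⊕ Fin m) (ω ω' : HashPair n m) (L : List (Fin n))
    (h : ∀ y ∈ L, ω.1 y = ω'.1 y ∧ ω.2 y = ω'.2 y) (hL : GoodList v ω L) : GoodList v ω' L := by
  induction L with
  | nil => trivial
  | cons x L ih =>
    obtain ⟨hx, hG, o, ho, hl⟩ := hL
    refine ⟨hx, ih (fun y hy => h y (List.mem_cons_of_mem _ hy)) hG, o, ho, ?_⟩
    rw [← (h x (by simp)).1, ← (h x (by simp)).2]
    rcases o with _ | y
    · exact hl
    · have hy : y ∈ L := by simpa using ho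
      have := h y (List.mem_cons_of_mem _ hy)
      simpa [linkL, linkR, this.1, this.2] using hl

theorem good_step {n m : ℕ} (v : Fin m ⊕ Fin m) (x : Fin n) (L : List (Fin n)) :
    (Finset.univ.filter fun ω : HashPair n m => GoodList v ω (x :: L)).card * m
      ≤ (2 * (L.length + 1)) *
        (Finset.univ.filter fun ω : HashPair n m => GoodList v ω L).card := by
  by_cases hx : x ∈ L
  · have : (Finset.univ.filter fun ω : HashPair n m => GoodList v ω (x :: L)) = ∅ := by
      ext ω; simp [GoodList, hx]
    rw [this]; simp
  set O : List (Option (Fin n)) := none :: L.map some with hO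
  let A : Option (Fin n) → Finset (HashPair n m) := fun o =>
    Finset.univ.filter fun ω => GoodList v ω L ∧ Sum.inl (ω.1 x) = linkL v ω.1 o
  let B : Option (Fin n) → Finset (HashPair n m) := fun o =>
    Finset.univ.filter fun ω => GoodList v ω L ∧ Sum.inr (ω.2 x) = linkR v ω.2 o
  set N := (Finset.univ.filter fun ω : HashPair n m => GoodList v ω L).card with hN
  have hsub : (Finset.univ.filter fun ω : HashPair n m => GoodList v ω (x :: L))
      ⊆ O.toFinset.biUnion (fun o => A o ∪ B o) := by
    intro ω hω
    obtain ⟨_, hG, o, ho, hl⟩ := (Finset.mem_filter.1 hω).2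
    simp only [Finset.mem_biUnion, List.mem_toFinset, Finset.mem_union, A, B, Finset.mem_filter,
      Finset.mem_univ, true_and]
    exact ⟨o, ho, hl.imp (fun h => ⟨hG, h⟩) (fun h => ⟨hG, h⟩)⟩
  have hself : ∀ (ω : HashPair n m), ∀ o ∈ O, ∀ a,
      linkL v (Function.update ω.1 x a) o = linkL v ω.1 o ∧
      linkR v (Function.update ω.2 x a) o = linkR v ω.2 o := fun ω o ho a =>
    ⟨linkL_update v _ x a L hx o ho, linkR_update v _ x a L hx o ho⟩
  have hne : ∀ y ∈ L, y ≠ x := fun y hy h => hx (h ▸ hy)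
  have hA : ∀ o ∈ O, (A o).card * m ≤ N := by
    intro o ho
    convert count_update (fun ω : HashPair n m => ω.1 x) (fun ω a => (Function.update ω.1 x a, ω.2))
      (by simp) (by simp) (by simp) (fun ω => GoodList v ω L)
      (fun ω a h => good_congr v ω _ L (fun y hy => by simp [hne y hy]) h)
      (fun ω => linkL v ω.1 o) (fun ω a => (hself ω o ho a).1) _ Sum.inl_injective
  have hB : ∀ o ∈ O, (B o).card * m ≤ N := by
    intro o ho
    convert count_update (fun ω : HashPair n m => ω.2 x) (fun ω a => (ω.1, Function.update ω.2 x a))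
      (by simp) (by simp) (by simp) (fun ω => GoodList v ω L)
      (fun ω a h => good_congr v ω _ L (fun y hy => by simp [hne y hy]) h)
      (fun ω => linkR v ω.2 o) (fun ω a => (hself ω o ho a).2) _ Sum.inr_injective
  have hlen : O.toFinset.card ≤ L.length + 1 := by
    refine (List.toFinset_card_le O).trans ?_
    simp [hO]
  calc _ ≤ (∑ o ∈ O.toFinset, ((A o).card + (B o).card)) * m := by
        apply Nat.mul_le_mul_right
        refine (Finset.card_le_card hsub).trans (Finset.card_biUnion_le.trans ?_)
        exact Finset.sum_le_sum fun o _ => Finset.card_union_le _ _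
    _ = ∑ o ∈ O.toFinset, ((A o).card * m + (B o).card * m) := by
        rw [Finset.sum_mul]; simp only [add_mul]
    _ ≤ ∑ o ∈ O.toFinset, (2 * N) := by
        apply Finset.sum_le_sum
        intro o ho
        have := hA o (List.mem_toFinset.1 ho)
        have := hB o (List.mem_toFinset.1 ho)
        omega
    _ = O.toFinset.card * (2 * N) := by simp
    _ ≤ (L.length + 1) * (2 * N) := Nat.mul_le_mul_right _ hlen
    _ = _ := by ring

theorem good_count {n m : ℕ} (v : Fin m ⊕ Fin m) (k : ℕ) (L : List (Fin n)) (hk : L.length ≤ k) :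
    (Finset.univ.filter fun ω : HashPair n m => GoodList v ω L).card * m ^ L.length
      ≤ (2 * k) ^ L.length * Fintype.card (HashPair n m) := by
  induction L with
  | nil => simpa using Finset.card_le_univ (Finset.univ.filter fun ω : HashPair n m => GoodList v ω [])
  | cons x L ih =>
    have hk' : L.length + 1 ≤ k := by simpa using hk
    have ih := ih (by omega)
    have st := good_step v x L
    simp only [List.length_cons, pow_succ]
    calc _ = ((Finset.univ.filter fun ω : HashPair n m => GoodList v ω (x :: L)).card * m)
            * m ^ L.length := by ring
      _ ≤ ((2 * (L.length + 1)) *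
        (Finset.univ.filter fun ω : HashPair n m => GoodList v ω L).card) * m ^ L.length :=
          Nat.mul_le_mul_right _ st
      _ = (2 * (L.length + 1)) * ((Finset.univ.filter fun ω : HashPair n m =>
            GoodList v ω L).card * m ^ L.length) := by ring
      _ ≤ (2 * k) * ((2 * k) ^ L.length * Fintype.card (HashPair n m)) := by gcongr
      _ = _ := by ring

theorem exists_good {n m : ℕ} (v : Fin m ⊕ Fin m) (ω : HashPair n m) (j : ℕ)
    (hj : j ≤ cuckooC n m ω.1 ω.2 v) : ∃ L : List (Fin n), L.length = j ∧ GoodList v ω L := by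
  induction j with
  | zero => exact ⟨[], rfl, trivial⟩
  | succ j ih =>
    obtain ⟨L, hL, hG⟩ := ih (by omega)
    by_contra hcon
    have hno : ∀ x, x ∉ L → ∀ o ∈ (none :: L.map some : List (Option (Fin n))),
        ¬ (Sum.inl (ω.1 x) = linkL v ω.1 o ∨ Sum.inr (ω.2 x) = linkR v ω.2 o) := by
      intro x hx o ho h
      exact hcon ⟨x :: L, by simp [hL], hx, hG, o, ho, h⟩
    let S : Fin m ⊕ Fin m → Prop := fun u =>
      u = v ∨ ∃ y ∈ L, u = Sum.inl (ω.1 y) ∨ u = Sum.inr (ω.2 y)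
    have hl : ∀ x, S (Sum.inl (ω.1 x)) → x ∈ L := by
      intro x h
      by_contra hx
      rcases h with h | ⟨y, hy, h | h⟩
      · exact hno x hx none (by simp) (Or.inl h)
      · exact hno x hx (some y) (by simp [hy]) (Or.inl h)
      · cases h
    have hr : ∀ x, S (Sum.inr (ω.2 x)) → x ∈ L := by
      intro x h
      by_contra hx
      rcases h with h | ⟨y, hy, h | h⟩
      · exact hno x hx none (by simp) (Or.inr h)
      · cases h
      · exact hno x hx (some y) (by simp [hy]) (Or.inr h)
    have hcl : ∀ a b, cuckooConn n m ω.1 ω.2 a b → (S a ↔ S b) := by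
      intro a b h
      induction h with
      | rel a b h =>
        obtain ⟨x, rfl, rfl⟩ := h
        exact ⟨fun h => Or.inr ⟨x, hl x h, Or.inr rfl⟩, fun h => Or.inr ⟨x, hr x h, Or.inl rfl⟩⟩
      | refl => rfl
      | symm _ _ _ ih => exact ih.symm
      | trans _ _ _ _ _ ih1 ih2 => exact ih1.trans ih2
    have hle : cuckooC n m ω.1 ω.2 v ≤ j := by
      unfold cuckooC
      rw [Nat.card_eq_fintype_card, Fintype.card_subtype, ← hL]
      refine (Finset.card_le_card (t := L.toFinset) ?_).trans (List.toFinset_card_le L)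
      intro x hx
      exact List.mem_toFinset.2 (hl x ((hcl _ _ (Finset.mem_filter.1 hx).2).2 (Or.inl rfl)))
    omega

theorem count_bound {n m : ℕ} (v : Fin m ⊕ Fin m) (k : ℕ) :
    (Finset.univ.filter fun ω : HashPair n m => k ≤ cuckooC n m ω.1 ω.2 v).card * m ^ k
      ≤ n ^ k * ((2 * k) ^ k * Fintype.card (HashPair n m)) := by
  have hsub : (Finset.univ.filter fun ω : HashPair n m => k ≤ cuckooC n m ω.1 ω.2 v) ⊆
      (Finset.univ : Finset (Fin k → Fin n)).biUnion (fun f =>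
        Finset.univ.filter fun ω : HashPair n m => GoodList v ω (List.ofFn f)) := by
    intro ω hω
    obtain ⟨L, rfl, hG⟩ := exists_good v ω k (Finset.mem_filter.1 hω).2
    simp only [Finset.mem_biUnion, Finset.mem_filter, Finset.mem_univ, true_and]
    exact ⟨L.get, by rw [List.ofFn_get]; exact hG⟩
  calc _ ≤ (∑ f : Fin k → Fin n, (Finset.univ.filter fun ω : HashPair n m =>
            GoodList v ω (List.ofFn f)).card) * m ^ k :=
        Nat.mul_le_mul_right _ ((Finset.card_le_card hsub).trans Finset.card_biUnion_le)
    _ = ∑ f : Fin k → Fin n, (Finset.univ.filter fun ω : HashPair n m =>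
            GoodList v ω (List.ofFn f)).card * m ^ k := Finset.sum_mul _ _ _
    _ ≤ ∑ f : Fin k → Fin n, ((2 * k) ^ k * Fintype.card (HashPair n m)) := by
        apply Finset.sum_le_sum
        intro f _
        simpa using good_count v k (List.ofFn f) (by simp)
    _ = _ := by simp

theorem pr_bound {n m : ℕ} (v : Fin m ⊕ Fin m) (k : ℕ) :
    cuckooPr n m (fun ω => k ≤ cuckooC n m ω.1 ω.2 v) ≤ (2 * n * k / m : ℝ) ^ k := by
  have hm : 0 < m := by rcases v with v | v <;> exact v.pos
  have : Nonempty (Fin m) := ⟨⟨0, hm⟩⟩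
  have hT : (0 : ℝ) < Fintype.card (HashPair n m) := by exact_mod_cast Fintype.card_pos
  have hm' : (0 : ℝ) < (m : ℝ) ^ k := by positivity
  have h := count_bound (n := n) v k
  unfold cuckooPr
  rw [Nat.card_eq_fintype_card, Nat.card_eq_fintype_card, Fintype.card_subtype, div_pow,
    div_le_div_iff₀ hT hm']
  have h' : ((Finset.univ.filter fun ω : HashPair n m => k ≤ cuckooC n m ω.1 ω.2 v).card : ℝ)
      * (m : ℝ) ^ k ≤ (n : ℝ) ^ k * ((2 * k) ^ k * Fintype.card (HashPair n m)) := by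
    exact_mod_cast h
  calc _ ≤ _ := h'
    _ = _ := by rw [mul_pow, mul_pow, mul_pow]; ring

/-- For the sparse inner cuckoo graph with `n' ≤ 2·m^{1/3}` edges on parts of size
`m' = ⌈m^{2/3}⌉`: for every `1 ≤ k ≤ m^{1/4}` and every vertex `v`,
`Pr(C(v) ≥ k) ≤ m^{−c·k}` for some universal constant `c > 0` and all large enough `m`. -/
theorem inner_cuckoo_component_size_bound :
    ∃ c : ℝ, 0 < c ∧ ∃ m₀ : ℕ, ∀ m : ℕ, m₀ ≤ m →
      ∀ m' : ℕ, m' = ⌈(m : ℝ) ^ ((2 : ℝ) / 3)⌉₊ →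
      ∀ n' : ℕ, 0 < n' → (n' : ℝ) ≤ 2 * (m : ℝ) ^ ((1 : ℝ) / 3) →
      ∀ k : ℕ, 1 ≤ k → (k : ℝ) ≤ (m : ℝ) ^ ((1 : ℝ) / 4) →
      ∀ v : Fin m' ⊕ Fin m',
        cuckooPr n' m' (fun ω => k ≤ cuckooC n' m' ω.1 ω.2 v)
          ≤ (m : ℝ) ^ (-(c * k)) := by
  refine ⟨1 / 24, by norm_num, 4 ^ 24, ?_⟩
  intro m hm m' hm' n' _ hn k _ hk v
  have hmR : (4 : ℝ) ^ 24 ≤ m := by exact_mod_cast hm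
  have hm0 : (0 : ℝ) < m := lt_of_lt_of_le (by norm_num) hmR
  refine (pr_bound v k).trans ?_
  have hm'R : (m : ℝ) ^ ((2 : ℝ) / 3) ≤ m' := by rw [hm']; exact Nat.le_ceil _
  have hpos : (0 : ℝ) < (m : ℝ) ^ ((2 : ℝ) / 3) := Real.rpow_pos_of_pos hm0 _
  have h4 : (4 : ℝ) ≤ (m : ℝ) ^ ((1 : ℝ) / 24) := by
    calc (4 : ℝ) = ((4 : ℝ) ^ (24 : ℕ)) ^ ((1 : ℝ) / 24) := by
          rw [← Real.rpow_natCast, ← Real.rpow_mul (by norm_num)]; norm_num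
      _ ≤ _ := Real.rpow_le_rpow (by norm_num) hmR (by norm_num)
  have hbase : (2 * n' * k / m' : ℝ) ≤ (m : ℝ) ^ (-((1 : ℝ) / 24)) := by
    rw [div_le_iff₀ (hpos.trans_le hm'R)]
    calc (2 * n' * k : ℝ) ≤ 2 * (2 * (m : ℝ) ^ ((1 : ℝ) / 3)) * (m : ℝ) ^ ((1 : ℝ) / 4) := by
          gcongr
      _ = 4 * ((m : ℝ) ^ ((1 : ℝ) / 3) * (m : ℝ) ^ ((1 : ℝ) / 4)) := by ring
      _ ≤ (m : ℝ) ^ ((1 : ℝ) / 24) * ((m : ℝ) ^ ((1 : ℝ) / 3) * (m : ℝ) ^ ((1 : ℝ) / 4)) := by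
          gcongr
      _ = (m : ℝ) ^ (-((1 : ℝ) / 24)) * (m : ℝ) ^ ((2 : ℝ) / 3) := by
          rw [← Real.rpow_add hm0, ← Real.rpow_add hm0, ← Real.rpow_add hm0]; norm_num
      _ ≤ _ := by gcongr
  calc (2 * n' * k / m' : ℝ) ^ k ≤ ((m : ℝ) ^ (-((1 : ℝ) / 24))) ^ k := by gcongr
    _ = _ := by
      rw [← Real.rpow_natCast, ← Real.rpow_mul hm0.le]; congr 1; ring
end

section
/- Fix a constant ε > 0. There exist a constant c > 0 and a threshold m₀ (both depending only on ε) such that for all integers m ≥ m₀ and n ≥ 1 with (1+ε)·n ≤ m, and every real s with 1 ≤ s ≤ m^{1/6}, the random cuckoo graph with n edges on parts of size m satisfies Pr(ē(G) > s) ≤ m^{−c·s}. -/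
open Classical

open Finset in
/-- Surjections with all fibres of size at least two. -/
lemma count_T (α β : Type) [Fintype α] [Fintype β] :
    Fintype.card {f : α → β // ∀ b, ∃ x y, x ≠ y ∧ f x = b ∧ f y = b} * 2 ^ Fintype.card β
      ≤ (Fintype.card α).descFactorial (2 * Fintype.card β)
        * (Fintype.card β) ^ (Fintype.card α - 2 * Fintype.card β) := by
  set S := {f : α → β // ∀ b, ∃ x y, x ≠ y ∧ f x = b ∧ f y = b}
  have hS : ∀ f : S, ∃ P Q : β → α, ∀ b, P b ≠ Q b ∧ f.1 (P b) = b ∧ f.1 (Q b) = b := by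
    intro f
    choose P Q h using f.2
    exact ⟨P, Q, h⟩
  choose P Q hPQ using hS
  have hne : ∀ f b, P f b ≠ Q f b := fun f b => (hPQ f b).1
  have hP : ∀ (f : S) b, f.1 (P f b) = b := fun f b => (hPQ f b).2.1
  have hQ : ∀ (f : S) b, f.1 (Q f b) = b := fun f b => (hPQ f b).2.2
  let pi : S × (β → Bool) → (β × Bool ↪ α) := fun p =>
    ⟨fun i => if xor (p.2 i.1) i.2 then P p.1 i.1 else Q p.1 i.1, by
      have key : ∀ i : β × Bool,
          p.1.1 (if xor (p.2 i.1) i.2 then P p.1 i.1 else Q p.1 i.1) = i.1 := by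
        intro i; split_ifs
        · exact hP _ _
        · exact hQ _ _
      rintro ⟨b, i⟩ ⟨c, j⟩ h
      have h1 := key (b, i)
      have h2 := key (c, j)
      simp only at h h1 h2
      have hbc : b = c := by rw [← h1, ← h2, h]
      subst hbc
      have := hne p.1 b
      have := this.symm
      cases i <;> cases j <;> cases hb : p.2 b <;> simp_all⟩
  have hpi : ∀ (p : S × (β → Bool)) (i : β × Bool), p.1.1 (pi p i) = i.1 := by
    intro p i
    change p.1.1 (if xor (p.2 i.1) i.2 then P p.1 i.1 else Q p.1 i.1) = i.1
    split_ifs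
    · exact hP _ _
    · exact hQ _ _
  have main := Finset.card_le_mul_card_image_of_maps_to (s := (univ : Finset (S × (β → Bool))))
    (t := (univ : Finset (β × Bool ↪ α))) (f := pi) (by simp)
    ((Fintype.card β) ^ (Fintype.card α - 2 * Fintype.card β)) (by
      intro e _
      have hc : Fintype.card ({x : α // x ∉ Set.range e} → β)
          = (Fintype.card β) ^ (Fintype.card α - 2 * Fintype.card β) := by
        rw [Fintype.card_fun]
        congr 1
        have := Fintype.card_subtype_compl (fun x : α => x ∈ Set.range e)
        rw [this]
        congr 1
        have h2 : Fintype.card {x // x ∈ Set.range e} = Fintype.card (β × Bool) :=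
          (Fintype.card_congr (Equiv.ofInjective e e.injective)).symm
        rw [h2]; simp [mul_comm]
      rw [← hc, ← Finset.card_univ]
      apply Finset.card_le_card_of_injOn (fun p => fun x => p.1.1 x.1) (by simp)
      rintro ⟨f, b⟩ hp ⟨g, c⟩ hq h
      simp only [coe_filter, mem_univ, true_and, Set.mem_ofPred_eq] at hp hq
      have hfg : f = g := by
        apply Subtype.ext
        funext x
        by_cases hx : x ∈ Set.range e
        · obtain ⟨i, rfl⟩ := hx
          have h1 := hpi (f, b) i
          have h2 := hpi (g, c) i
          rw [hp] at h1
          rw [hq] at h2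
          simp only at h1 h2
          rw [h1, h2]
        · exact congrFun h ⟨x, hx⟩
      subst hfg
      have : b = c := by
        funext i
        have h3 : pi (f, b) (i, false) = pi (f, c) (i, false) := by rw [hp, hq]
        simp only [pi, Function.Embedding.coeFn_mk] at h3
        have h4 := hne f i
        have h5 := h4.symm
        cases hb : b i <;> cases hc : c i <;> simp_all
      rw [this])
  rw [Finset.card_univ, Finset.card_univ, Fintype.card_prod, Fintype.card_fun, Fintype.card_bool,
    Fintype.card_embedding_eq, Fintype.card_prod, Fintype.card_bool] at main
  calc _ ≤ _ := main
    _ = _ := by rw [mul_comm, mul_comm (Fintype.card β) 2]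

/-- `A` is mapped onto `I` with all fibres of size at least two. -/
def goodMap {n m : ℕ} (h : Fin n → Fin m) (A : Finset (Fin n)) (I : Finset (Fin m)) : Prop :=
  A.image h = I ∧ ∀ x ∈ A, ∃ y ∈ A, y ≠ x ∧ h y = h x

lemma count_good {n m : ℕ} (A : Finset (Fin n)) (I : Finset (Fin m)) :
    Fintype.card {h : Fin n → Fin m // goodMap h A I} * 2 ^ I.card
      ≤ (A.card).descFactorial (2 * I.card) * I.card ^ (A.card - 2 * I.card)
        * m ^ (n - A.card) := by
  have h1 := count_T A I
  rw [Fintype.card_coe, Fintype.card_coe] at h1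
  have h2 : Fintype.card {h : Fin n → Fin m // goodMap h A I} ≤
      Fintype.card ({f : A → I // ∀ b, ∃ x y, x ≠ y ∧ f x = b ∧ f y = b}
        × ({x : Fin n // x ∉ A} → Fin m)) := by
    apply Fintype.card_le_of_injective (fun h =>
      (⟨fun x => ⟨h.1 x.1,
          (Finset.ext_iff.1 h.2.1 _).1 (Finset.mem_image_of_mem h.1 x.2)⟩, by
        rintro ⟨b, hb⟩
        have hb' : b ∈ A.image h.1 := by rw [h.2.1]; exact hb
        obtain ⟨x, hx, rfl⟩ := Finset.mem_image.1 hb'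
        obtain ⟨y, hy, hyx, e⟩ := h.2.2 x hx
        exact ⟨⟨x, hx⟩, ⟨y, hy⟩, fun h => hyx (congrArg Subtype.val h).symm, rfl,
          Subtype.ext e⟩⟩, fun x => h.1 x.1))
    intro h g e
    apply Subtype.ext
    funext x
    rw [Prod.mk.injEq] at e
    by_cases hx : x ∈ A
    · have := congrFun (congrArg Subtype.val e.1) ⟨x, hx⟩
      exact congrArg Subtype.val this
    · exact congrFun e.2 ⟨x, hx⟩
  have h3 : Fintype.card ({x : Fin n // x ∉ A} → Fin m) = m ^ (n - A.card) := by
    rw [Fintype.card_fun, Fintype.card_fin]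
    congr 1
    rw [Fintype.card_subtype_compl (fun x => x ∈ A)]
    simp
  rw [Fintype.card_prod, h3] at h2
  refine (Nat.mul_le_mul_right _ h2).trans ?_
  rw [mul_right_comm]
  refine Nat.mul_le_mul_right _ ?_
  convert h1

lemma count_good_real {n m : ℕ} (A : Finset (Fin n)) (I : Finset (Fin m)) (hA : 1 ≤ A.card) :
    (Fintype.card {h : Fin n → Fin m // goodMap h A I} : ℝ)
      ≤ (A.card.factorial : ℝ) * ((A.card : ℝ) ^ A.card / ((A.card : ℝ) ^ 2) ^ I.card)
        / 2 ^ I.card * (m : ℝ) ^ (n - A.card) := by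
  have h := count_good A I
  have hA' : (0 : ℝ) < A.card := by exact_mod_cast hA
  by_cases hv : 2 * I.card ≤ A.card
  · have h2 : (A.card).descFactorial (2 * I.card) ≤ A.card.factorial := by
      rw [← Nat.factorial_mul_descFactorial hv]
      exact Nat.le_mul_of_pos_left _ (Nat.factorial_pos _)
    have h3 : I.card ^ (A.card - 2 * I.card) ≤ A.card ^ (A.card - 2 * I.card) :=
      Nat.pow_le_pow_left (by omega) _
    have h4 := h.trans (Nat.mul_le_mul_right _ (Nat.mul_le_mul h2 h3))
    have h5 : (A.card : ℝ) ^ A.card / ((A.card : ℝ) ^ 2) ^ I.card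
        = (A.card : ℝ) ^ (A.card - 2 * I.card) := by
      rw [← pow_mul, pow_sub₀ _ hA'.ne' hv, div_eq_mul_inv]
    rw [h5, div_mul_eq_mul_div, le_div_iff₀ (by positivity)]
    exact_mod_cast h4
  · rw [Nat.descFactorial_of_lt (by omega)] at h
    have : Fintype.card {h : Fin n → Fin m // goodMap h A I} = 0 := by
      have h2 : 0 < 2 ^ I.card := by positivity
      simp only [zero_mul] at h
      by_contra hc
      have := Nat.mul_pos (Nat.pos_of_ne_zero hc) h2
      omega
    rw [this]
    push_cast
    positivity

open Finset in
lemma exists_dense {n m : ℕ} (h₀ h₁ : Fin n → Fin m) (k : ℕ) (hk : k ≤ cuckooEbar n m h₀ h₁) :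
    ∃ A : Finset (Fin n), (A.image h₀).card + (A.image h₁).card + k ≤ A.card := by
  unfold cuckooEbar at hk
  rw [finsum_eq_sum_of_fintype] at hk
  set q : Fin m ⊕ Fin m → Quotient (cuckooSetoid n m h₀ h₁) :=
    Quotient.mk (cuckooSetoid n m h₀ h₁) with hq
  set E : Quotient (cuckooSetoid n m h₀ h₁) → ℕ :=
    fun c => Nat.card {x : Fin n // q (Sum.inl (h₀ x)) = c} with hE
  set V : Quotient (cuckooSetoid n m h₀ h₁) → ℕ :=
    fun c => Nat.card {u : Fin m ⊕ Fin m // q u = c} with hV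
  change k ≤ ∑ c, (E c - V c) at hk
  let Pf : Finset (Quotient (cuckooSetoid n m h₀ h₁)) := univ.filter (fun c => V c < E c)
  have h1 : ∑ c, (E c - V c) = ∑ c ∈ Pf, (E c - V c) := by
    symm
    apply Finset.sum_subset (subset_univ _)
    intro c _ hc
    simp only [Pf, mem_filter, mem_univ, true_and] at hc
    omega
  have h2 : ∑ c ∈ Pf, (E c - V c) + ∑ c ∈ Pf, V c = ∑ c ∈ Pf, E c := by
    rw [← Finset.sum_add_distrib]
    apply Finset.sum_congr rfl
    intro c hc
    simp only [Pf, mem_filter, mem_univ, true_and] at hc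
    omega
  let A : Finset (Fin n) := univ.filter (fun x => q (Sum.inl (h₀ x)) ∈ Pf)
  let U : Finset (Fin m ⊕ Fin m) := univ.filter (fun u => q u ∈ Pf)
  have hAc : A.card = ∑ c ∈ Pf, E c := by
    rw [Finset.card_eq_sum_card_fiberwise (f := fun x => q (Sum.inl (h₀ x))) (t := Pf)]
    · apply Finset.sum_congr rfl
      intro c hc
      simp only [hE]
      rw [Nat.card_eq_fintype_card, Fintype.card_subtype]
      congr 1
      ext x
      simp only [A, mem_filter, mem_univ, true_and]
      constructor
      · exact fun h => h.2
      · exact fun h => ⟨h ▸ hc, h⟩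
    · intro x hx
      simpa [A] using hx
  have hUc : U.card = ∑ c ∈ Pf, V c := by
    rw [Finset.card_eq_sum_card_fiberwise (f := q) (t := Pf)]
    · apply Finset.sum_congr rfl
      intro c hc
      simp only [hV]
      rw [Nat.card_eq_fintype_card, Fintype.card_subtype]
      congr 1
      ext x
      simp only [U, mem_filter, mem_univ, true_and]
      constructor
      · exact fun h => h.2
      · exact fun h => ⟨h ▸ hc, h⟩
    · intro x hx
      simpa [U] using hx
  have hIJ : (A.image h₀).card + (A.image h₁).card ≤ U.card := by
    rw [← Finset.card_disjSum]
    apply Finset.card_le_card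
    intro u hu
    rw [Finset.mem_disjSum] at hu
    simp only [U, mem_filter, mem_univ, true_and]
    rcases hu with ⟨a, ha, rfl⟩ | ⟨a, ha, rfl⟩
    · obtain ⟨x, hx, rfl⟩ := Finset.mem_image.1 ha
      simpa [A] using hx
    · obtain ⟨x, hx, rfl⟩ := Finset.mem_image.1 ha
      have e : q (Sum.inr (h₁ x)) = q (Sum.inl (h₀ x)) := by
        symm
        apply Quotient.sound
        exact Relation.EqvGen.rel _ _ ⟨x, rfl, rfl⟩
      rw [e]
      simpa [A] using hx
  exact ⟨A, by omega⟩

open Finset in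
lemma exists_good_s4 {n m : ℕ} (h₀ h₁ : Fin n → Fin m) (k : ℕ) (hk1 : 1 ≤ k)
    (hk : k ≤ cuckooEbar n m h₀ h₁) :
    ∃ (A : Finset (Fin n)) (I J : Finset (Fin m)),
      A.card = I.card + J.card + k ∧ goodMap h₀ A I ∧ goodMap h₁ A J := by
  let F : Finset (Finset (Fin n)) :=
    univ.filter (fun A => (A.image h₀).card + (A.image h₁).card + k ≤ A.card)
  have hF : F.Nonempty := by
    obtain ⟨A, hA⟩ := exists_dense h₀ h₁ k hk
    exact ⟨A, by simpa [F] using hA⟩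
  obtain ⟨A, hAF, hmin⟩ := Finset.exists_min_image F Finset.card hF
  have hA : (A.image h₀).card + (A.image h₁).card + k ≤ A.card := by simpa [F] using hAF
  have hno : ∀ x ∈ A, ¬ (((A.erase x).image h₀).card + ((A.erase x).image h₁).card + k
      ≤ (A.erase x).card) := by
    intro x hx hc
    have := hmin (A.erase x) (by simpa [F] using hc)
    have h2 := Finset.card_erase_lt_of_mem hx
    omega
  have hmono : ∀ (h : Fin n → Fin m) x, ((A.erase x).image h).card ≤ (A.image h).card :=
    fun h x => Finset.card_le_card (Finset.image_subset_image (Finset.erase_subset _ _))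
  have hlt : ∀ (h : Fin n → Fin m) x, x ∈ A → (∀ y ∈ A, y ≠ x → h y ≠ h x) →
      ((A.erase x).image h).card < (A.image h).card := by
    intro h x hx hy
    apply Finset.card_lt_card
    refine ⟨Finset.image_subset_image (Finset.erase_subset _ _), fun hs => ?_⟩
    have := hs (Finset.mem_image_of_mem h hx)
    obtain ⟨y, hyA, e⟩ := Finset.mem_image.1 this
    rw [Finset.mem_erase] at hyA
    exact hy y hyA.2 hyA.1 e
  refine ⟨A, A.image h₀, A.image h₁, ?_, ⟨rfl, ?_⟩, ⟨rfl, ?_⟩⟩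
  · have hne : A.Nonempty := Finset.card_pos.1 (by omega)
    obtain ⟨x, hx⟩ := hne
    have h1 := hno x hx
    have h2 := hmono h₀ x
    have h3 := hmono h₁ x
    rw [Finset.card_erase_of_mem hx] at h1
    omega
  · intro x hx
    by_contra hc
    push Not at hc
    have h1 := hno x hx
    have h2 := hlt h₀ x hx hc
    have h3 := hmono h₁ x
    rw [Finset.card_erase_of_mem hx] at h1
    omega
  · intro x hx
    by_contra hc
    push Not at hc
    have h1 := hno x hx
    have h2 := hlt h₁ x hx hc
    have h3 := hmono h₀ x
    rw [Finset.card_erase_of_mem hx] at h1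
    omega

open Finset in
lemma union_bound (n m k : ℕ) (hk1 : 1 ≤ k) :
    Nat.card {ω : HashPair n m // k ≤ cuckooEbar n m ω.1 ω.2} ≤
      ∑ A : Finset (Fin n), ∑ I : Finset (Fin m), ∑ J : Finset (Fin m),
        if A.card = I.card + J.card + k then
          Fintype.card {h : Fin n → Fin m // goodMap h A I}
            * Fintype.card {h : Fin n → Fin m // goodMap h A J} else 0 := by
  let G : Finset (Fin n) × Finset (Fin m) × Finset (Fin m) → Finset (HashPair n m) := fun t =>
    if t.1.card = t.2.1.card + t.2.2.card + k then
      (univ.filter (fun h => goodMap h t.1 t.2.1)) ×ˢ (univ.filter (fun h => goodMap h t.1 t.2.2))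
    else ∅
  rw [Nat.card_eq_fintype_card, Fintype.card_subtype]
  calc _ ≤ ((univ : Finset (Finset (Fin n) × Finset (Fin m) × Finset (Fin m))).biUnion G).card := by
        apply Finset.card_le_card
        intro ω hω
        simp only [mem_filter, mem_univ, true_and] at hω
        obtain ⟨A, I, J, h1, h2, h3⟩ := exists_good_s4 ω.1 ω.2 k hk1 hω
        rw [Finset.mem_biUnion]
        refine ⟨(A, I, J), mem_univ _, ?_⟩
        simp [G, h1, h2, h3]
    _ ≤ ∑ t, (G t).card := Finset.card_biUnion_le
    _ = _ := by
        rw [Fintype.sum_prod_type]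
        refine Finset.sum_congr rfl fun A _ => ?_
        rw [Fintype.sum_prod_type]
        refine Finset.sum_congr rfl fun I _ => Finset.sum_congr rfl fun J _ => ?_
        simp only [G]
        split_ifs
        · rw [Finset.card_product, Fintype.card_subtype, Fintype.card_subtype]
        · simp

/-- The real bound for the number of good maps. -/
noncomputable def gBound (n m L v : ℕ) : ℝ :=
  (L.factorial : ℝ) * ((L : ℝ) ^ L / ((L : ℝ) ^ 2) ^ v) / 2 ^ v * (m : ℝ) ^ (n - L)

lemma gBound_nonneg (n m L v : ℕ) : 0 ≤ gBound n m L v := by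
  unfold gBound; positivity

open Finset in
lemma sum_bound (n m k : ℕ) (hk1 : 1 ≤ k) :
    (Nat.card {ω : HashPair n m // k ≤ cuckooEbar n m ω.1 ω.2} : ℝ) ≤
      ∑ L ∈ range (n + 1), (n.choose L : ℝ) * ∑ v ∈ range (m + 1), (m.choose v : ℝ) *
        ∑ w ∈ range (m + 1), (m.choose w : ℝ) *
          (if L = v + w + k then gBound n m L v * gBound n m L w else 0) := by
  have h := union_bound n m k hk1
  have h' : (Nat.card {ω : HashPair n m // k ≤ cuckooEbar n m ω.1 ω.2} : ℝ) ≤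
      ∑ A : Finset (Fin n), ∑ I : Finset (Fin m), ∑ J : Finset (Fin m),
        (if A.card = I.card + J.card + k then
          gBound n m A.card I.card * gBound n m A.card J.card else 0) := by
    refine (Nat.cast_le (α := ℝ) |>.2 h).trans ?_
    push_cast
    refine Finset.sum_le_sum fun A _ => Finset.sum_le_sum fun I _ =>
      Finset.sum_le_sum fun J _ => ?_
    split_ifs with hc
    · have hA : 1 ≤ A.card := by omega
      exact mul_le_mul (count_good_real A I hA) (count_good_real A J hA) (Nat.cast_nonneg _)
        (gBound_nonneg _ _ _ _)
    · exact le_refl _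
  refine h'.trans (le_of_eq ?_)
  have key : ∀ (N : ℕ) (F : ℕ → ℝ), ∑ A : Finset (Fin N), F A.card
      = ∑ L ∈ range (N + 1), (N.choose L : ℝ) * F L := by
    intro N F
    have := Finset.sum_powerset_apply_card F (x := (univ : Finset (Fin N)))
    simpa using this
  rw [← key n (fun L => ∑ v ∈ range (m + 1), (m.choose v : ℝ) *
        ∑ w ∈ range (m + 1), (m.choose w : ℝ) *
          (if L = v + w + k then gBound n m L v * gBound n m L w else 0))]
  refine Finset.sum_congr rfl fun A _ => ?_
  rw [← key m (fun v => ∑ w ∈ range (m + 1), (m.choose w : ℝ) *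
          (if A.card = v + w + k then gBound n m A.card v * gBound n m A.card w else 0))]
  refine Finset.sum_congr rfl fun I _ => ?_
  rw [← key m (fun w =>
          (if A.card = I.card + w + k then gBound n m A.card I.card * gBound n m A.card w else 0))]

open Finset in
lemma sum_inv_fact (N : ℕ) :
    ∑ p ∈ antidiagonal N, (1 : ℝ) / (p.1.factorial * p.2.factorial) = 2 ^ N / N.factorial := by
  rw [eq_div_iff (by positivity), Finset.sum_mul]
  have : ∀ p ∈ antidiagonal N, (1 : ℝ) / (p.1.factorial * p.2.factorial) * N.factorial
      = (N.choose p.1 : ℝ) := by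
    intro p hp
    rw [HasAntidiagonal.mem_antidiagonal] at hp
    subst hp
    have h := Nat.add_choose_mul_factorial_mul_factorial p.1 p.2
    rw [← h]
    push_cast
    field_simp
    rw [Nat.choose_symm_add]
  rw [Finset.sum_congr rfl this, Finset.Nat.sum_antidiagonal_eq_sum_range_succ_mk]
  have := Nat.sum_range_choose N
  exact_mod_cast this

open Finset in
lemma term_bound (n m k L : ℕ) (hk1 : 1 ≤ k) (hm : 1 ≤ m) (hL : L ≤ n) :
    (n.choose L : ℝ) * ∑ v ∈ range (m + 1), (m.choose v : ℝ) *
        ∑ w ∈ range (m + 1), (m.choose w : ℝ) *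
          (if L = v + w + k then gBound n m L v * gBound n m L w else 0)
      ≤ (((n : ℝ) / m) ^ L * (L : ℝ) ^ (3 * k) / (m : ℝ) ^ k) * (m : ℝ) ^ (2 * n) := by
  have hm0 : (0 : ℝ) < m := by exact_mod_cast hm
  by_cases hLk : L < k
  · have : ∀ v w, ¬ (L = v + w + k) := by intro v w; omega
    simp only [this, if_false, mul_zero, Finset.sum_const_zero]
    positivity
  obtain ⟨N, rfl⟩ : ∃ N, L = N + k := ⟨L - k, by omega⟩
  obtain ⟨r, rfl⟩ : ∃ r, n = N + k + r := ⟨n - (N + k), by omega⟩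
  set L := N + k with hLdef
  have hL0 : (0 : ℝ) < L := by exact_mod_cast (by omega : 0 < L)
  set K : ℝ := (m : ℝ) ^ N * (L.factorial : ℝ) ^ 2 * (L : ℝ) ^ (2 * k) / 2 ^ N * ((m : ℝ) ^ r) ^ 2
    with hK
  have hK0 : 0 ≤ K := by positivity
  have h1 : ∑ v ∈ range (m + 1), (m.choose v : ℝ) *
        ∑ w ∈ range (m + 1), (m.choose w : ℝ) *
          (if L = v + w + k then gBound (L + r) m L v * gBound (L + r) m L w else 0)
      ≤ K * (2 ^ N / N.factorial) := by
    rw [← sum_inv_fact, Finset.mul_sum]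
    simp_rw [Finset.mul_sum]
    rw [← Finset.sum_product']
    rw [← Finset.sum_filter_add_sum_filter_not (range (m + 1) ×ˢ range (m + 1))
      (fun p => p.1 + p.2 = N)]
    rw [Finset.sum_eq_zero (s := filter (fun p : ℕ × ℕ => ¬ (p.1 + p.2 = N)) _), add_zero]
    · refine (Finset.sum_le_sum (g := fun p : ℕ × ℕ =>
        K * (1 / ((p.1.factorial : ℝ) * p.2.factorial))) ?_).trans
        (Finset.sum_le_sum_of_subset_of_nonneg ?_ ?_)
      · rintro ⟨v, w⟩ hp
        simp only [mem_filter] at hp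
        obtain ⟨_, hvw⟩ := hp
        simp only
        rw [if_pos (by omega)]
        have c1 : (m.choose v : ℝ) ≤ (m : ℝ) ^ v / v.factorial := Nat.choose_le_pow_div v m
        have c2 : (m.choose w : ℝ) ≤ (m : ℝ) ^ w / w.factorial := Nat.choose_le_pow_div w m
        have g0 := gBound_nonneg (L + r) m L v
        have g1 := gBound_nonneg (L + r) m L w
        calc _ ≤ (m : ℝ) ^ v / v.factorial * ((m : ℝ) ^ w / w.factorial *
              (gBound (L + r) m L v * gBound (L + r) m L w)) := by gcongr
          _ = _ := by
            unfold gBound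
            rw [hK, Nat.add_sub_cancel_left]
            have e1 : (L : ℝ) ^ L * (L : ℝ) ^ L
                = (L : ℝ) ^ (2 * k) * (((L : ℝ) ^ 2) ^ v * ((L : ℝ) ^ 2) ^ w) := by
              rw [← pow_mul, ← pow_mul, ← pow_add, ← pow_add, ← pow_add]
              congr 1
              omega
            have e2 : (L : ℝ) ^ (2 * k)
                = (L : ℝ) ^ L * (L : ℝ) ^ L / (((L : ℝ) ^ 2) ^ v * ((L : ℝ) ^ 2) ^ w) := by
              rw [e1]; field_simp
            rw [e2, ← hvw, pow_add, pow_add]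
            field_simp
            rw [pow_add]
      · intro p hp
        simp only [mem_filter] at hp
        exact HasAntidiagonal.mem_antidiagonal.2 hp.2
      · intro p _ _
        positivity
    · rintro ⟨v, w⟩ hp
      simp only [mem_filter] at hp
      rw [if_neg (by simp only; omega)]
      simp
  have c3 : ((L + r).choose L : ℝ) ≤ ((L + r : ℕ) : ℝ) ^ L / L.factorial :=
    Nat.choose_le_pow_div L (L + r)
  have c4 : (L.factorial : ℝ) ≤ N.factorial * (L : ℝ) ^ k := by
    have h2 := Nat.factorial_mul_descFactorial (show k ≤ L by omega)
    have h3 := Nat.descFactorial_le_pow L k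
    rw [show L - k = N by omega] at h2
    rw [← h2]
    exact_mod_cast Nat.mul_le_mul_left _ h3
  calc _ ≤ ((L + r : ℕ) : ℝ) ^ L / L.factorial * (K * (2 ^ N / N.factorial)) := by
        refine mul_le_mul c3 h1 ?_ (by positivity)
        refine Finset.sum_nonneg fun v _ => mul_nonneg (by positivity)
          (Finset.sum_nonneg fun w _ => mul_nonneg (by positivity) ?_)
        split_ifs
        · exact mul_nonneg (gBound_nonneg _ _ _ _) (gBound_nonneg _ _ _ _)
        · exact le_refl _
    _ = ((L + r : ℕ) : ℝ) ^ L * (m : ℝ) ^ N * (L : ℝ) ^ (2 * k) * ((m : ℝ) ^ r) ^ 2 / N.factorial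
          * L.factorial := by
        rw [hK]; field_simp
    _ ≤ ((L + r : ℕ) : ℝ) ^ L * (m : ℝ) ^ N * (L : ℝ) ^ (2 * k) * ((m : ℝ) ^ r) ^ 2 / N.factorial
          * (N.factorial * (L : ℝ) ^ k) := by gcongr
    _ = _ := by
        have e5 : (m : ℝ) ^ (2 * (L + r)) = (m : ℝ) ^ L * (m : ℝ) ^ N * (m : ℝ) ^ k
            * ((m : ℝ) ^ r) ^ 2 := by
          rw [← pow_mul, ← pow_add, ← pow_add, ← pow_add]
          congr 1
          omega
        rw [div_pow, e5, show 3 * k = 2 * k + k by ring, pow_add (L : ℝ)]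
        field_simp

open Finset in
lemma prob_bound (n m k : ℕ) (hk1 : 1 ≤ k) (hm : 1 ≤ m) :
    cuckooPr n m (fun ω => k ≤ cuckooEbar n m ω.1 ω.2) ≤
      ∑ L ∈ range (n + 1), ((n : ℝ) / m) ^ L * (L : ℝ) ^ (3 * k) / (m : ℝ) ^ k := by
  have hm0 : (0 : ℝ) < m := by exact_mod_cast hm
  unfold cuckooPr
  have hc : (Nat.card (HashPair n m) : ℝ) = (m : ℝ) ^ (2 * n) := by
    simp [HashPair, two_mul, pow_add]
  rw [hc, div_le_iff₀ (by positivity), Finset.sum_mul]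
  refine (sum_bound n m k hk1).trans (Finset.sum_le_sum fun L hL => ?_)
  exact term_bound n m k L hk1 hm (by simpa [Nat.lt_succ_iff] using hL)

open Finset in
lemma analytic_bound (d : ℝ) (hd : 0 < d) (n k : ℕ) (hk1 : 1 ≤ k) (ρ : ℝ) (hρ0 : 0 ≤ ρ)
    (hρ : ρ ≤ Real.exp (-(2 * d))) :
    ∑ L ∈ range (n + 1), ρ ^ L * (L : ℝ) ^ (3 * k)
      ≤ (1 - Real.exp (-d))⁻¹ * (3 * k / d) ^ (3 * k) := by
  have he : Real.exp (-d) < 1 := by rw [Real.exp_lt_one_iff]; linarith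
  calc _ ≤ ∑ L ∈ range (n + 1), Real.exp (-d) ^ L * (3 * k / d) ^ (3 * k) := by
        refine Finset.sum_le_sum fun L _ => ?_
        have h1 : ρ ^ L ≤ Real.exp (-d) ^ L * Real.exp (-(d * L)) := by
          calc ρ ^ L ≤ (Real.exp (-(2 * d))) ^ L := by gcongr
            _ = _ := by
              rw [← Real.exp_nat_mul, ← Real.exp_nat_mul, ← Real.exp_add]
              congr 1; ring
        have h2 : (d * L) ^ (3 * k) / (3 * k).factorial ≤ Real.exp (d * L) :=
          Real.pow_div_factorial_le_exp _ (by positivity) _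
        have h3 : ((3 * k).factorial : ℝ) ≤ (3 * k : ℝ) ^ (3 * k) := by
          exact_mod_cast Nat.factorial_le_pow (3 * k)
        have h4 : (L : ℝ) ^ (3 * k) ≤ Real.exp (d * L) * (3 * k / d) ^ (3 * k) := by
          rw [div_le_iff₀ (by positivity), mul_pow] at h2
          rw [div_pow, mul_div_assoc', le_div_iff₀ (by positivity), mul_comm]
          exact h2.trans (by gcongr)
        calc _ ≤ (Real.exp (-d) ^ L * Real.exp (-(d * L))) *
              (Real.exp (d * L) * (3 * k / d) ^ (3 * k)) := by gcongr
          _ = Real.exp (-d) ^ L * (3 * k / d) ^ (3 * k) *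
              (Real.exp (-(d * L)) * Real.exp (d * L)) := by ring
          _ = _ := by rw [← Real.exp_add]; simp
    _ ≤ _ := by
        rw [← Finset.sum_mul]
        gcongr
        rw [← tsum_geometric_of_lt_one (Real.exp_nonneg _) he]
        exact (summable_geometric_of_lt_one (Real.exp_nonneg _) he).sum_le_tsum _
          (fun i _ => by positivity)

theorem outer_stash_bound (ε : ℝ) (hε : 0 < ε) :
    ∃ c : ℝ, 0 < c ∧ ∃ m₀ : ℕ, ∀ m n : ℕ, m₀ ≤ m → 1 ≤ n → (1 + ε) * n ≤ m →
      ∀ s : ℝ, 1 ≤ s → s ≤ (m : ℝ) ^ ((1 : ℝ) / 6) →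
        cuckooPr n m (fun ω => s < (cuckooEbar n m ω.1 ω.2 : ℝ))
          ≤ (m : ℝ) ^ (-(c * s)) := by
  set d : ℝ := Real.log (1 + ε) / 2 with hd_def
  have hd : 0 < d := by
    have : 0 < Real.log (1 + ε) := Real.log_pos (by linarith)
    positivity
  set C : ℝ := (1 - Real.exp (-d))⁻¹ with hC_def
  have he : Real.exp (-d) < 1 := by rw [Real.exp_lt_one_iff]; linarith
  have hC : 1 ≤ C := by
    rw [hC_def]
    apply (one_le_inv₀ (by linarith)).2
    have := Real.exp_pos (-d)
    linarith
  set K : ℝ := (6 / d) ^ 3 with hK_def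
  have hK : 0 < K := by positivity
  refine ⟨1 / 4, by norm_num, ⌈(C * K) ^ 4⌉₊ + 1, ?_⟩
  intro m n hm hn hnm s hs1 hs
  have hm1 : 1 ≤ m := by omega
  have hm0 : (0 : ℝ) < m := by exact_mod_cast hm1
  have hm1' : (1 : ℝ) ≤ m := by exact_mod_cast hm1
  set k : ℕ := ⌊s⌋₊ + 1 with hk_def
  have hk1 : 1 ≤ k := by omega
  have hsk : s ≤ k := by
    have := Nat.lt_floor_add_one s
    rw [hk_def]; push_cast; linarith
  have hk2 : (k : ℝ) ≤ 2 * (m : ℝ) ^ ((1 : ℝ) / 6) := by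
    have := Nat.floor_le (show 0 ≤ s by linarith)
    rw [hk_def]; push_cast; linarith
  have hev : (fun ω : HashPair n m => s < (cuckooEbar n m ω.1 ω.2 : ℝ))
      = (fun ω : HashPair n m => k ≤ cuckooEbar n m ω.1 ω.2) := by
    funext ω
    apply propext
    rw [hk_def, Nat.succ_le_iff, Nat.floor_lt (by linarith)]
  rw [hev]
  refine (prob_bound n m k hk1 hm1).trans ?_
  rw [← Finset.sum_div]
  have hρ : (n : ℝ) / m ≤ Real.exp (-(2 * d)) := by
    rw [show 2 * d = Real.log (1 + ε) by rw [hd_def]; ring, Real.exp_neg,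
      Real.exp_log (by linarith), div_le_iff₀ hm0, inv_mul_eq_div, le_div_iff₀ (by linarith)]
    linarith
  have hA := analytic_bound d hd n k hk1 ((n : ℝ) / m) (by positivity) hρ
  have hkd : (3 * k / d) ^ 3 ≤ K * (m : ℝ) ^ ((1 : ℝ) / 2) := by
    have e : (m : ℝ) ^ ((1 : ℝ) / 2) = ((m : ℝ) ^ ((1 : ℝ) / 6)) ^ 3 := by
      rw [← Real.rpow_natCast, ← Real.rpow_mul hm0.le]; norm_num
    rw [e, hK_def, ← mul_pow]
    gcongr
    rw [div_mul_eq_mul_div]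
    exact div_le_div_of_nonneg_right (by linarith) hd.le
  have hCK : C * K ≤ (m : ℝ) ^ ((1 : ℝ) / 4) := by
    have h1 : (C * K) ^ 4 ≤ m := by
      refine (Nat.le_ceil _).trans ?_
      exact_mod_cast (by omega : ⌈(C * K) ^ 4⌉₊ ≤ m)
    have h2 : C * K = ((C * K) ^ 4) ^ ((1 : ℝ) / 4) := by
      rw [← Real.rpow_natCast, ← Real.rpow_mul (by positivity)]; norm_num
    rw [h2]
    exact Real.rpow_le_rpow (by positivity) h1 (by norm_num)
  calc _ ≤ C * (3 * k / d) ^ (3 * k) / (m : ℝ) ^ k := by gcongr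
    _ ≤ C ^ k * (K * (m : ℝ) ^ ((1 : ℝ) / 2)) ^ k / (m : ℝ) ^ k := by
        rw [pow_mul]
        gcongr
        exact le_self_pow₀ hC (by omega)
    _ = ((C * K) * (m : ℝ) ^ ((1 : ℝ) / 2) / m) ^ k := by
        rw [← mul_pow, ← div_pow]; ring
    _ ≤ ((m : ℝ) ^ ((1 : ℝ) / 4) * (m : ℝ) ^ ((1 : ℝ) / 2) / m) ^ k := by gcongr
    _ = (m : ℝ) ^ (-(1 / 4 * (k : ℝ))) := by
        have e : (m : ℝ) ^ ((1 : ℝ) / 4) * (m : ℝ) ^ ((1 : ℝ) / 2) / m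
            = (m : ℝ) ^ (-(1 / 4) : ℝ) := by
          rw [← Real.rpow_add hm0]
          nth_rewrite 2 [← Real.rpow_one (m : ℝ)]
          rw [← Real.rpow_sub hm0]; norm_num
        rw [e, ← Real.rpow_natCast, ← Real.rpow_mul hm0.le]
        congr 1; ring
    _ ≤ _ := by
        apply Real.rpow_le_rpow_of_exponent_le hm1'
        linarith
end

section
/- There exist a constant c > 0 and a threshold m₀ such that the following holds for all m ≥ m₀. Let m' = ⌈m^{2/3}⌉ and let n' be a positive integer with n' ≤ 2·m^{1/3}. Then for every real s with 1 ≤ s < m^{1/6}, the random cuckoo graph with n' edges on parts of size m' satisfies Pr(ē(G) > s) ≤ m^{−c·s}. -/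
open Classical

/-- Items that create no new vertex when items are inserted in order. -/
noncomputable def staleSet (n m : ℕ) (h₀ h₁ : Fin n → Fin m) : Finset (Fin n) :=
  Finset.univ.filter (fun x => (∃ y < x, h₀ y = h₀ x) ∧ ∃ y < x, h₁ y = h₁ x)

lemma comp_bound (n m : ℕ) (h₀ h₁ : Fin n → Fin m) (c : Quotient (cuckooSetoid n m h₀ h₁)) :
    (Nat.card {x : Fin n // Quotient.mk (cuckooSetoid n m h₀ h₁) (Sum.inl (h₀ x)) = c}
      - Nat.card {u : Fin m ⊕ Fin m // Quotient.mk (cuckooSetoid n m h₀ h₁) u = c})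
    ≤ ((staleSet n m h₀ h₁).filter
        (fun x => Quotient.mk (cuckooSetoid n m h₀ h₁) (Sum.inl (h₀ x)) = c)).card := by
  rw [Nat.card_eq_fintype_card, Nat.card_eq_fintype_card, Fintype.card_subtype,
    Fintype.card_subtype, Nat.sub_le_iff_le_add]
  set A := Finset.univ.filter
    (fun x => Quotient.mk (cuckooSetoid n m h₀ h₁) (Sum.inl (h₀ x)) = c) with hA
  set B := Finset.univ.filter
    (fun u => Quotient.mk (cuckooSetoid n m h₀ h₁) u = c) with hB
  have h1 : (A.filter (fun x => x ∉ staleSet n m h₀ h₁)).card ≤ B.card := by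
    apply Finset.card_le_card_of_injOn
      (fun x => if (∃ y < x, h₀ y = h₀ x) then (Sum.inr (h₁ x) : Fin m ⊕ Fin m)
        else Sum.inl (h₀ x))
    · intro x hx
      simp only [Finset.coe_filter, Set.mem_setOf_eq, hA, Finset.mem_filter, Finset.mem_univ,
        true_and] at hx
      simp only [hB, Finset.coe_filter, Finset.mem_univ, true_and, Set.mem_setOf_eq]
      split_ifs
      · rw [← hx.1]
        apply Quotient.sound
        exact Relation.EqvGen.symm _ _ (Relation.EqvGen.rel _ _ ⟨x, rfl, rfl⟩)
      · exact hx.1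
    · intro x hx y hy hxy
      simp only [Finset.coe_filter, Set.mem_setOf_eq, staleSet, Finset.mem_filter,
        Finset.mem_univ, true_and, not_and] at hx hy
      have hx2 := hx.2
      have hy2 := hy.2
      simp only at hxy
      split_ifs at hxy with h3 h4 h4
      · have e := Sum.inr.inj hxy
        rcases lt_trichotomy x y with h | h | h
        · exact absurd ⟨x, h, e⟩ (hy2 h4)
        · exact h
        · exact absurd ⟨y, h, e.symm⟩ (hx2 h3)
      · have e := Sum.inl.inj hxy
        rcases lt_trichotomy x y with h | h | h
        · exact absurd ⟨x, h, e⟩ h4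
        · exact h
        · exact absurd ⟨y, h, e.symm⟩ h3
  have h2 : (A.filter (fun x => x ∈ staleSet n m h₀ h₁)).card ≤
      ((staleSet n m h₀ h₁).filter
        (fun x => Quotient.mk (cuckooSetoid n m h₀ h₁) (Sum.inl (h₀ x)) = c)).card := by
    apply Finset.card_le_card
    intro x hx
    simp only [hA, Finset.mem_filter, Finset.mem_univ, true_and] at hx ⊢
    exact ⟨hx.2, hx.1⟩
  have h3 := Finset.card_filter_add_card_filter_not (s := A) (fun x => x ∈ staleSet n m h₀ h₁)
  omega

lemma ebar_le (n m : ℕ) (h₀ h₁ : Fin n → Fin m) :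
    cuckooEbar n m h₀ h₁ ≤ (staleSet n m h₀ h₁).card := by
  unfold cuckooEbar
  rw [finsum_eq_sum_of_fintype]
  refine (Finset.sum_le_sum (fun c _ => comp_bound n m h₀ h₁ c)).trans ?_
  rw [← Finset.card_eq_sum_card_fiberwise (t := Finset.univ)]
  intro x _
  simp

/-- Number of hash functions for which every element of `S` collides with a smaller one. -/
lemma coll_count (n m : ℕ) (S : Finset (Fin n)) :
    (Finset.univ.filter (fun h : Fin n → Fin m => ∀ x ∈ S, ∃ y < x, h y = h x)).card * m ^ S.card
      ≤ n ^ S.card * m ^ n := by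
  set T := Finset.univ.filter (fun h : Fin n → Fin m => ∀ x ∈ S, ∃ y < x, h y = h x) with hT
  have hmem : ∀ h : T, ∀ x : S, ∃ y, y < x.1 ∧ h.1 y = h.1 x.1 := by
    intro h x
    have := (Finset.mem_filter.1 h.2).2 x.1 x.2
    exact this
  choose f hf1 hf2 using hmem
  have hinj : Function.Injective
      (fun h : T => ((fun x : {x // x ∉ S} => h.1 x.1), f h)) := by
    intro h g hg
    simp only [Prod.mk.injEq] at hg
    obtain ⟨e1, e2⟩ := hg
    apply Subtype.ext
    funext x
    induction x using WellFoundedLT.induction with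
    | ind x ih =>
      by_cases hx : x ∈ S
      · rw [← hf2 h ⟨x, hx⟩, ← hf2 g ⟨x, hx⟩, ← e2]
        exact ih _ (hf1 h ⟨x, hx⟩)
      · exact congrFun e1 ⟨x, hx⟩
  have hc := Fintype.card_le_of_injective _ hinj
  have hS : Fintype.card {x // x ∉ S} = n - S.card := by
    rw [Fintype.card_subtype_compl]; simp
  rw [Fintype.card_prod, Fintype.card_fun, Fintype.card_fun, hS] at hc
  simp only [Fintype.card_coe, Fintype.card_fin] at hc
  have hle : S.card ≤ n := by simpa using Finset.card_le_univ S
  calc T.card * m ^ S.card ≤ (m ^ (n - S.card) * n ^ S.card) * m ^ S.card :=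
        Nat.mul_le_mul_right _ hc
    _ = n ^ S.card * (m ^ (n - S.card) * m ^ S.card) := by ring
    _ = n ^ S.card * m ^ n := by rw [← pow_add, Nat.sub_add_cancel hle]

lemma event_count (n m k : ℕ) (E : HashPair n m → Prop)
    (hE : ∀ ω, E ω → k ≤ (staleSet n m ω.1 ω.2).card) :
    Nat.card {ω : HashPair n m // E ω} * (m ^ k) ^ 2 ≤ n ^ k * (n ^ k * m ^ n) ^ 2 := by
  let T : Finset (Fin n) → Finset (Fin n → Fin m) := fun S =>
    Finset.univ.filter (fun h : Fin n → Fin m => ∀ x ∈ S, ∃ y < x, h y = h x)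
  have hsub : Finset.univ.filter E ⊆
      (Finset.powersetCard k (Finset.univ : Finset (Fin n))).biUnion (fun S => T S ×ˢ T S) := by
    intro ω hω
    obtain ⟨S, hS, hSk⟩ := Finset.exists_subset_card_eq (hE ω (Finset.mem_filter.1 hω).2)
    rw [Finset.mem_biUnion]
    refine ⟨S, Finset.mem_powersetCard.2 ⟨Finset.subset_univ _, hSk⟩, ?_⟩
    simp only [T, Finset.mem_product, Finset.mem_filter, Finset.mem_univ, true_and]
    exact ⟨fun x hx => (Finset.mem_filter.1 (hS hx)).2.1,
      fun x hx => (Finset.mem_filter.1 (hS hx)).2.2⟩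
  rw [Nat.card_eq_fintype_card, Fintype.card_subtype]
  calc (Finset.univ.filter E).card * (m ^ k) ^ 2
      ≤ (∑ S ∈ Finset.powersetCard k (Finset.univ : Finset (Fin n)), (T S ×ˢ T S).card)
          * (m ^ k) ^ 2 :=
        Nat.mul_le_mul_right _ ((Finset.card_le_card hsub).trans Finset.card_biUnion_le)
    _ = ∑ S ∈ Finset.powersetCard k (Finset.univ : Finset (Fin n)),
          ((T S).card * m ^ k) ^ 2 := by
        rw [Finset.sum_mul]
        refine Finset.sum_congr rfl fun S _ => ?_
        rw [Finset.card_product]; ring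
    _ ≤ ∑ S ∈ Finset.powersetCard k (Finset.univ : Finset (Fin n)), (n ^ k * m ^ n) ^ 2 := by
        refine Finset.sum_le_sum fun S hS => ?_
        have hk := (Finset.mem_powersetCard.1 hS).2
        have := coll_count n m S
        rw [hk] at this
        exact Nat.pow_le_pow_left this 2
    _ ≤ n ^ k * (n ^ k * m ^ n) ^ 2 := by
        rw [Finset.sum_const, Finset.card_powersetCard, smul_eq_mul]
        refine Nat.mul_le_mul_right _ ?_
        simpa using Nat.choose_le_pow n k

/-- Stash-size bound for the sparse inner table: with `m' = ⌈m^{2/3}⌉` and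
`n' ≤ 2·m^{1/3}`, for every real `1 ≤ s < m^{1/6}`, `Pr(ē(G) > s) ≤ m^{−c·s}`,
for a universal constant `c > 0` and all large enough `m`. -/
theorem inner_stash_bound :
    ∃ c : ℝ, 0 < c ∧ ∃ m₀ : ℕ, ∀ m : ℕ, m₀ ≤ m →
      ∀ m' : ℕ, m' = ⌈(m : ℝ) ^ ((2 : ℝ) / 3)⌉₊ →
      ∀ n' : ℕ, 0 < n' → (n' : ℝ) ≤ 2 * (m : ℝ) ^ ((1 : ℝ) / 3) →
      ∀ s : ℝ, 1 ≤ s → s < (m : ℝ) ^ ((1 : ℝ) / 6) →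
        cuckooPr n' m' (fun ω => s < (cuckooEbar n' m' ω.1 ω.2 : ℝ))
          ≤ (m : ℝ) ^ (-(c * s)) := by
  refine ⟨1 / 6, by norm_num, 8 ^ 6, ?_⟩
  intro m hm M hM N _ hN s hs _
  have hm0 : (0 : ℝ) ≤ m := Nat.cast_nonneg m
  set t : ℝ := (m : ℝ) ^ ((1 : ℝ) / 6) with ht
  have ht8 : 8 ≤ t := by
    have h1 : ((8 : ℝ) ^ (6 : ℕ)) ^ ((1 : ℝ) / 6) ≤ t := by
      apply Real.rpow_le_rpow (by positivity) _ (by norm_num)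
      exact_mod_cast hm
    rw [← Real.rpow_natCast, ← Real.rpow_mul (by norm_num)] at h1
    norm_num at h1
    exact h1
  have ht0 : 0 < t := by linarith
  have ht2 : (m : ℝ) ^ ((1 : ℝ) / 3) = t ^ 2 := by
    rw [ht, ← Real.rpow_natCast, ← Real.rpow_mul hm0]; norm_num
  have ht4 : (m : ℝ) ^ ((2 : ℝ) / 3) = t ^ 4 := by
    rw [ht, ← Real.rpow_natCast, ← Real.rpow_mul hm0]; norm_num
  rw [ht2] at hN
  have hMt : t ^ 4 ≤ (M : ℝ) := by
    rw [hM, ht4]; exact Nat.le_ceil _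
  have hM0 : (0 : ℝ) < M := lt_of_lt_of_le (by positivity) hMt
  have hrhs : (m : ℝ) ^ (-(1 / 6 * s)) = t ^ (-s) := by
    rw [ht, ← Real.rpow_mul hm0]; congr 1; ring
  rw [hrhs]
  set k := ⌈s⌉₊ with hk
  have hcount := event_count N M k
    (fun ω => s < (cuckooEbar N M ω.1 ω.2 : ℝ)) (by
      intro ω hω
      refine le_trans ?_ (ebar_le N M ω.1 ω.2)
      exact Nat.ceil_le.2 (le_of_lt hω))
  have hcountR : (Nat.card {ω : HashPair N M // s < (cuckooEbar N M ω.1 ω.2 : ℝ)} : ℝ)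
      * ((M : ℝ) ^ k) ^ 2 ≤ (N : ℝ) ^ k * ((N : ℝ) ^ k * (M : ℝ) ^ N) ^ 2 := by
    exact_mod_cast hcount
  have hbase : (N : ℝ) ^ 3 / (M : ℝ) ^ 2 ≤ t⁻¹ := by
    rw [div_le_iff₀ (by positivity)]
    calc (N : ℝ) ^ 3 ≤ (2 * t ^ 2) ^ 3 := by gcongr
      _ = 8 * t ^ 6 := by ring
      _ ≤ t * t ^ 6 := by gcongr
      _ = t⁻¹ * (t ^ 4) ^ 2 := by field_simp
      _ ≤ t⁻¹ * (M : ℝ) ^ 2 := by gcongr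
  have hcard : (Nat.card (HashPair N M) : ℝ) = ((M : ℝ) ^ N) ^ 2 := by
    rw [Nat.card_eq_fintype_card, Fintype.card_prod, Fintype.card_fun]
    simp only [Fintype.card_fin]
    push_cast
    ring
  unfold cuckooPr
  rw [hcard]
  calc _ ≤ ((N : ℝ) ^ 3 / (M : ℝ) ^ 2) ^ k := by
        rw [div_le_iff₀ (by positivity), div_pow, div_mul_eq_mul_div,
          le_div_iff₀ (by positivity)]
        calc _ = (Nat.card {ω : HashPair N M // s < (cuckooEbar N M ω.1 ω.2 : ℝ)} : ℝ)
              * ((M : ℝ) ^ k) ^ 2 := by ring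
          _ ≤ _ := hcountR
          _ = _ := by ring
    _ ≤ (t⁻¹) ^ k := by gcongr
    _ = t ^ (-(k : ℝ)) := by rw [Real.rpow_neg ht0.le, Real.rpow_natCast, inv_pow]
    _ ≤ t ^ (-s) := by
        apply Real.rpow_le_rpow_of_exponent_le (by linarith)
        have := Nat.le_ceil s
        linarith
end

section
/- Fix a constant ε > 0 and suppose (1+ε)·n ≤ m. There exists a constant β ∈ (0,1), depending only on ε, such that for every vertex v of the random cuckoo graph with n edges on parts of size m and every natural number t ≥ 1, Pr(B_v ≥ t) ≤ ∑_{k=1}^∞ min((3·e⁵·k³/m)^t, 1) · β^k. -/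
open Classical

section Reach
variable {V E : Type}

def gReach (s d : E → V) (H : Set E) (S : Set V) : Set V :=
  {w | ∃ a ∈ S, Relation.EqvGen (fun a b => ∃ e ∈ H, a = s e ∧ b = d e) a w}

theorem subset_gReach (s d : E → V) (H : Set E) (S : Set V) : S ⊆ gReach s d H S :=
  fun a ha => ⟨a, ha, Relation.EqvGen.refl a⟩

theorem gReach_edge (s d : E → V) (H : Set E) (S : Set V) {e : E} (he : e ∈ H) :
    s e ∈ gReach s d H S ↔ d e ∈ gReach s d H S := by
  constructor
  · rintro ⟨a, ha, h⟩
    exact ⟨a, ha, h.trans _ _ _ (Relation.EqvGen.rel _ _ ⟨e, he, rfl, rfl⟩)⟩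
  · rintro ⟨a, ha, h⟩
    exact ⟨a, ha, h.trans _ _ _ ((Relation.EqvGen.rel _ _ ⟨e, he, rfl, rfl⟩).symm)⟩

theorem gReach_min (s d : E → V) (H : Set E) (S C : Set V) (hS : S ⊆ C)
    (hC : ∀ e ∈ H, (s e ∈ C ↔ d e ∈ C)) : gReach s d H S ⊆ C := by
  rintro w ⟨a, ha, h⟩
  have key : ∀ x y, Relation.EqvGen (fun a b => ∃ e ∈ H, a = s e ∧ b = d e) x y →
      (x ∈ C ↔ y ∈ C) := by
    intro x y hxy
    induction hxy with
    | rel x y h => obtain ⟨e, he, rfl, rfl⟩ := h; exact hC e he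
    | refl x => rfl
    | symm x y _ ih => exact ih.symm
    | trans x y z _ _ ih1 ih2 => exact ih1.trans ih2
  exact (key a w h).1 (hS ha)

theorem gReach_mono (s d : E → V) {H H' : Set E} (S : Set V) (h : H ⊆ H') :
    gReach s d H S ⊆ gReach s d H' S :=
  gReach_min _ _ _ _ _ (subset_gReach _ _ _ _) fun _ he => gReach_edge _ _ _ _ (h he)

theorem gReach_step (s d : E → V) (H H' : Set E) (S S' : Set V) (u : V)
    (hS : S ⊆ insert u S')
    (hH : ∀ e ∈ H, (s e = u → d e ∈ S') ∧ (d e = u → s e ∈ S') ∧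
      (s e ≠ u → d e ≠ u → e ∈ H')) :
    gReach s d H S ⊆ insert u (gReach s d H' S') := by
  apply gReach_min
  · exact hS.trans (Set.insert_subset_insert (subset_gReach _ _ _ _))
  · intro e he
    obtain ⟨h1, h2, h3⟩ := hH e he
    have sub := subset_gReach s d H' S'
    by_cases a : s e = u
    · have : d e ∈ gReach s d H' S' := sub (h1 a)
      simp [a, this]
    · by_cases b : d e = u
      · have : s e ∈ gReach s d H' S' := sub (h2 b)
        simp [b, this]
      · have := gReach_edge s d H' S' (h3 a b)
        simp [a, b, this]

end Reach

set_option maxHeartbeats 1000000 in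
theorem cuckoo_moment {V E ι : Type} [Fintype V] [Fintype E] [Fintype ι] [DecidableEq V]
    [DecidableEq E] [DecidableEq ι]
    (s d : E → V) (Δ : ℕ)
    (hΔ : ∀ u, (Finset.univ.filter (fun e => s e = u ∨ d e = u)).card ≤ Δ)
    (M K L : ℝ) (hM : 0 < M) (hK : 1 ≤ K) (hL : 1 ≤ L)
    (hmain : L * (1 + (K - 1) * Δ / M) ^ (Fintype.card ι) ≤ K) :
    ∀ (l : ℕ) (E' : Finset E) (S : Finset V) (Q : ι → Finset E),
      M + Δ * l ≤ E'.card → (∀ x, Q x = E' ∨ Disjoint (Q x) E') →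
      ∑ h ∈ Fintype.piFinset Q, L ^ (min l (gReach s d (Set.range h ∩ E') S).ncard)
        ≤ K ^ S.card * ∏ x, ((Q x).card : ℝ) := by
  intro l
  induction l with
  | zero =>
    intro E' S Q _ _
    simp only [Nat.zero_min, pow_zero, Finset.sum_const, nsmul_eq_mul, mul_one,
      Fintype.card_piFinset]
    push_cast
    have := one_le_pow₀ hK (n := S.card)
    have h2 : (0:ℝ) ≤ ∏ x, ((Q x).card : ℝ) := Finset.prod_nonneg fun _ _ => by positivity
    nlinarith
  | succ l ih =>
    intro E' S Q hE hQ
    rcases S.eq_empty_or_nonempty with rfl | ⟨u, hu⟩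
    · have : ∀ h : ι → E, gReach s d (Set.range h ∩ E') ((∅ : Finset V) : Set V) = ∅ := by
        intro h
        ext w; simp [gReach]
      simp only [this]
      simp [Fintype.card_piFinset]
    set D : Finset E := E'.filter (fun e => s e = u ∨ d e = u) with hD
    have hDc : D.card ≤ Δ := le_trans (Finset.card_le_card
      (Finset.filter_subset_filter _ (Finset.subset_univ _))) (hΔ u)
    let O : ι → Finset (Option E) := fun x => Finset.insertNone (Q x ∩ D)
    let Qp : (ι → Option E) → ι → Finset E := fun p x => (p x).elim (Q x \ D) (fun e => {e})
    let f : (ι → E) → (ι → Option E) := fun h x => if h x ∈ D then some (h x) else none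
    let oth : E → V := fun e => if s e = u then d e else s e
    let Sp : (ι → Option E) → Finset V := fun p =>
      S.erase u ∪ (Finset.univ.biUnion fun x => (p x).elim ∅ (fun e => {oth e}))
    have hmaps : ∀ h ∈ Fintype.piFinset Q, f h ∈ Fintype.piFinset O := by
      intro h hh
      rw [Fintype.mem_piFinset] at hh ⊢
      intro x
      simp only [f, O]
      split_ifs with hx
      · simp [hh x, hx]
      · simp
    rw [← Finset.sum_fiberwise_of_maps_to hmaps]
    have hL0 : (0:ℝ) ≤ L := by linarith
    have hK0 : (0:ℝ) ≤ K := by linarith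
    -- each fiber
    have hfib : ∀ p ∈ Fintype.piFinset O,
        ∑ h ∈ (Fintype.piFinset Q).filter (fun h => f h = p),
          L ^ (min (l+1) (gReach s d (Set.range h ∩ E') S).ncard)
        ≤ (L * K ^ (S.card - 1)) *
          ∏ x, ((p x).elim ((Q x \ D).card : ℝ) (fun _ => K)) := by
      intro p hp
      rw [Fintype.mem_piFinset] at hp
      have hsub : (Fintype.piFinset Q).filter (fun h => f h = p) ⊆ Fintype.piFinset (Qp p) := by
        intro h hh
        rw [Finset.mem_filter, Fintype.mem_piFinset] at hh
        obtain ⟨h1, rfl⟩ := hh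
        rw [Fintype.mem_piFinset]
        intro x
        simp only [Qp, f]
        split_ifs with hx
        · simp
        · simp [h1 x, hx]
      have hstep : ∀ h ∈ Fintype.piFinset (Qp p),
          L ^ (min (l+1) (gReach s d (Set.range h ∩ E') S).ncard) ≤
          L * L ^ (min l (gReach s d (Set.range h ∩ (E' \ D : Finset E)) (Sp p)).ncard) := by
        intro h hh
        rw [Fintype.mem_piFinset] at hh
        rw [← pow_succ']
        apply pow_le_pow_right₀ hL
        have hr := gReach_step s d (Set.range h ∩ E') (Set.range h ∩ (E' \ D : Finset E))
          S (Sp p) u ?_ ?_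
        · have := (Set.ncard_le_ncard hr (Set.toFinite _)).trans (Set.ncard_insert_le _ _)
          omega
        · intro a ha
          by_cases hau : a = u
          · simp [hau]
          · right
            simp only [Sp, Finset.coe_union, Finset.coe_erase]
            left; exact ⟨ha, hau⟩
        · rintro e ⟨⟨x, rfl⟩, he⟩
          have hmem : h x ∈ D → oth (h x) ∈ (Sp p : Set V) := by
            intro hxD
            have := hh x
            simp only [Qp] at this
            cases hpx : p x with
            | none => simp [hpx, hxD] at this
            | some e =>
              simp [hpx] at this
              simp only [Sp, Finset.coe_union]
              right
              simp only [Finset.coe_biUnion, Set.mem_iUnion]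
              exact ⟨x, by simp, by simp [hpx, this]⟩
          have he' : h x ∈ E' := he
          refine ⟨fun h1 => ?_, fun h1 => ?_, fun h1 h2 => ?_⟩
          · have := hmem (by simp [hD, he', h1])
            simpa [oth, h1] using this
          · have := hmem (by simp [hD, he', h1])
            by_cases h2 : s (h x) = u
            · simp only [oth, h2, if_true] at this
              rw [h2, ← h1]; exact this
            · simpa [oth, h2] using this
          · exact ⟨⟨x, rfl⟩, by simp [hD, he', h1, h2]⟩
      have hIH := ih (E' \ D) (Sp p) (Qp p) ?_ ?_
      · have hcard : (Sp p).card ≤ (S.card - 1) + ∑ x, (p x).elim 0 (fun _ => 1) := by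
          refine (Finset.card_union_le _ _).trans ?_
          rw [Finset.card_erase_of_mem hu]
          gcongr
          refine Finset.card_biUnion_le.trans (Finset.sum_le_sum fun x _ => ?_)
          cases p x <;> simp
        calc _ ≤ ∑ h ∈ Fintype.piFinset (Qp p),
              L ^ (min (l+1) (gReach s d (Set.range h ∩ E') S).ncard) :=
              Finset.sum_le_sum_of_subset_of_nonneg hsub fun _ _ _ => by positivity
          _ ≤ ∑ h ∈ Fintype.piFinset (Qp p), L *
              L ^ (min l (gReach s d (Set.range h ∩ (E' \ D : Finset E)) (Sp p)).ncard) :=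
              Finset.sum_le_sum hstep
          _ ≤ L * (K ^ (Sp p).card * ∏ x, ((Qp p x).card : ℝ)) := by
              rw [← Finset.mul_sum]; gcongr
          _ ≤ L * ((K ^ (S.card - 1) * ∏ x, (p x).elim (1:ℝ) (fun _ => K)) *
                ∏ x, ((Qp p x).card : ℝ)) := by
              refine mul_le_mul_of_nonneg_left (mul_le_mul_of_nonneg_right ?_
                (Finset.prod_nonneg fun _ _ => Nat.cast_nonneg _)) hL0
              refine (pow_le_pow_right₀ hK hcard).trans ?_
              rw [pow_add]
              refine mul_le_mul_of_nonneg_left ?_ (pow_nonneg hK0 _)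
              rw [← Finset.prod_pow_eq_pow_sum]
              apply le_of_eq
              apply Finset.prod_congr rfl
              intro x _
              cases p x <;> simp
          _ = _ := by
              rw [mul_assoc (K ^ _), ← Finset.prod_mul_distrib, ← mul_assoc]
              congr 1
              apply Finset.prod_congr rfl
              intro x _
              simp only [Qp]
              cases p x <;> simp
      · have : E'.card ≤ (E' \ D).card + D.card := by
          have := Finset.le_card_sdiff D E'
          omega
        have h2 : (E'.card : ℝ) ≤ (E' \ D).card + Δ := by
          exact_mod_cast this.trans (by omega)
        push_cast at hE
        linarith
      · intro x
        simp only [Qp]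
        have := hp x
        cases hpx : p x with
        | none =>
          rcases hQ x with h | h
          · left; simp [h]
          · right
            simp only [Option.elim]
            exact h.mono Finset.sdiff_subset Finset.sdiff_subset
        | some e =>
          right
          simp [O, hpx] at this
          simp [this.2]
    refine (Finset.sum_le_sum hfib).trans ?_
    rw [← Finset.mul_sum]
    have hps := Finset.prod_univ_sum O (fun x o => o.elim ((Q x \ D).card : ℝ) (fun _ => K))
    rw [← hps]
    set ρ : ℝ := 1 + (K - 1) * Δ / M with hρ
    have hρ1 : 1 ≤ ρ := by
      have : 0 ≤ (K - 1) * Δ / M := by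
        have : 0 ≤ K - 1 := by linarith
        positivity
      linarith
    have hfac : ∀ x, ∑ o ∈ O x, o.elim ((Q x \ D).card : ℝ) (fun _ => K)
        ≤ ρ * ((Q x).card : ℝ) := by
      intro x
      have h1 : ∑ o ∈ O x, o.elim ((Q x \ D).card : ℝ) (fun _ => K)
          = (Q x \ D).card + (Q x ∩ D).card * K := by
        simp only [O, Finset.sum_insertNone]
        simp
      have h2 : ((Q x \ D).card : ℝ) + (Q x ∩ D).card = (Q x).card := by
        exact_mod_cast Finset.card_sdiff_add_card_inter _ _
      rw [h1]
      rcases hQ x with h | h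
      · have h3 : ((Q x ∩ D).card : ℝ) ≤ Δ := by
          exact_mod_cast (Finset.card_le_card Finset.inter_subset_right).trans hDc
        have h4 : M ≤ (Q x).card := by
          rw [h]
          have : (0:ℝ) ≤ Δ * (l + 1 : ℕ) := by positivity
          linarith
        have h5 : (Δ : ℝ) ≤ Δ / M * (Q x).card := by
          rw [div_mul_eq_mul_div, le_div_iff₀ hM]
          gcongr
        have : ρ * (Q x).card = (Q x).card + (K - 1) * (Δ / M * (Q x).card) := by
          rw [hρ]; ring
        rw [this]
        have : (K - 1) * (Q x ∩ D).card ≤ (K-1) * (Δ / M * (Q x).card) :=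
          mul_le_mul_of_nonneg_left (h3.trans h5) (by linarith)
        linarith
      · have : Q x ∩ D = ∅ := by
          rw [← Finset.disjoint_iff_inter_eq_empty]
          exact h.mono_right (Finset.filter_subset _ _)
        rw [this] at h2 ⊢
        simp at h2 ⊢
        rw [h2]
        nlinarith [(Nat.cast_nonneg (Q x).card : (0:ℝ) ≤ _)]
    have hprod : ∏ x, ∑ o ∈ O x, o.elim ((Q x \ D).card : ℝ) (fun _ => K)
        ≤ ρ ^ Fintype.card ι * ∏ x, ((Q x).card : ℝ) := by
      refine (Finset.prod_le_prod ?_ fun x _ => hfac x).trans ?_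
      · intro x _
        apply Finset.sum_nonneg
        intro o _
        cases o <;> simp [hK0]
      · rw [Finset.prod_mul_distrib]; simp
    have hpos : (0:ℝ) ≤ ∏ x, ((Q x).card : ℝ) := Finset.prod_nonneg fun _ _ => by positivity
    calc _ ≤ L * K ^ (S.card - 1) * (ρ ^ Fintype.card ι * ∏ x, ((Q x).card : ℝ)) :=
            mul_le_mul_of_nonneg_left hprod (mul_nonneg hL0 (pow_nonneg hK0 _))
      _ = (L * ρ ^ Fintype.card ι) * K ^ (S.card - 1) * ∏ x, ((Q x).card : ℝ) := by ring
      _ ≤ K * K ^ (S.card - 1) * ∏ x, ((Q x).card : ℝ) :=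
            mul_le_mul_of_nonneg_right (mul_le_mul_of_nonneg_right hmain (pow_nonneg hK0 _)) hpos
      _ = _ := by
        rw [← pow_succ']
        congr 2
        have := Finset.card_pos.2 ⟨u, hu⟩
        omega

def cuS (m : ℕ) (e : Fin m × Fin m) : Fin m ⊕ Fin m := Sum.inl e.1
def cuD (m : ℕ) (e : Fin m × Fin m) : Fin m ⊕ Fin m := Sum.inr e.2

theorem cuckoo_degree (m : ℕ) (u : Fin m ⊕ Fin m) :
    (Finset.univ.filter (fun e => cuS m e = u ∨ cuD m e = u)).card ≤ m := by
  rcases u with a | a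
  · have : (Finset.univ.filter (fun e => cuS m e = Sum.inl a ∨ cuD m e = Sum.inl a)) ⊆
        Finset.univ.image (fun b : Fin m => (a, b)) := by
      intro e he
      simp [cuS, cuD] at he
      simp [← he]
    exact (Finset.card_le_card this).trans (Finset.card_image_le.trans (by simp))
  · have : (Finset.univ.filter (fun e => cuS m e = Sum.inr a ∨ cuD m e = Sum.inr a)) ⊆
        Finset.univ.image (fun b : Fin m => (b, a)) := by
      intro e he
      simp [cuS, cuD] at he
      simp [← he]
    exact (Finset.card_le_card this).trans (Finset.card_image_le.trans (by simp))

theorem cuckoo_size_bound (ε : ℝ) (hε : 0 < ε) :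
    ∃ C α : ℝ, 1 ≤ C ∧ 0 < α ∧ α < 1 ∧ ∀ (m : ℕ) (ι : Type) [Fintype ι] [DecidableEq ι], 0 < m →
      (1 + ε) * Fintype.card ι ≤ m → ∀ (v : Fin m ⊕ Fin m) (k : ℕ),
      ((Finset.univ.filter (fun h : ι → Fin m × Fin m =>
        (gReach (cuS m) (cuD m) (Set.range h) {v}).ncard = k)).card : ℝ)
        ≤ C * α ^ k * ((m:ℝ) ^ 2) ^ Fintype.card ι := by
  set y : ℝ := ε / 4 with hy
  set c : ℝ := 1 / (1 + ε / 2) with hc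
  set K : ℝ := 1 + y with hK
  set δ : ℝ := ε / (2 * (1 + ε)) with hδ
  have hδ0 : 0 < δ := by positivity
  have hδ1 : δ < 1 := by
    rw [hδ, div_lt_one (by positivity)]; linarith
  have hc0 : 0 < c := by positivity
  have hK1 : 1 < K := by rw [hK, hy]; linarith
  set L : ℝ := K * Real.exp (-(y * c)) with hL
  have hL1 : 1 < L := by
    have h1 : 1 - y * c ≤ Real.exp (-(y*c)) := by
      have := Real.add_one_le_exp (-(y*c)); linarith
    have h2 : 1 < K * (1 - y * c) := by
      rw [hK, hy, hc]
      have : (1 + ε / 4) * (1 - ε / 4 * (1 / (1 + ε / 2))) = 1 + ε^2/16 / (1 + ε/2) := by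
        field_simp; ring
      rw [this]
      have : 0 < ε^2/16 / (1 + ε/2) := by positivity
      linarith
    nlinarith
  have hL0 : 0 < L := by linarith
  refine ⟨K * L, L ^ (-(δ/2)), by nlinarith, by positivity,
    Real.rpow_lt_one_of_one_lt_of_neg hL1 (by linarith), ?_⟩
  intro m ι _ _ hm hn v k
  have hm' : (0:ℝ) < m := by exact_mod_cast hm
  set N := Fintype.card ι with hN
  set l : ℕ := ⌊δ * m⌋₊ with hl
  have hl1 : (l:ℝ) ≤ δ * m := Nat.floor_le (by positivity)
  have hl2 : δ * m < l + 1 := Nat.lt_floor_add_one _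
  set M : ℝ := (1 - δ) * m^2 with hM
  have hM0 : 0 < M := by
    have : 0 < 1 - δ := by linarith
    positivity
  have hmain : L * (1 + (K - 1) * m / M) ^ N ≤ K := by
    have h1 : (1 + (K - 1) * m / M) ^ N ≤ Real.exp (y * c) := by
      have h2 : 1 + (K - 1) * m / M ≤ Real.exp (y * (m / M)) := by
        have := Real.add_one_le_exp (y * (m / M))
        have e : (K - 1) * m / M = y * (m/M) := by rw [hK]; ring
        rw [e]; linarith
      have h0 : 0 ≤ (K - 1) * m / M := by
        have : 0 < K - 1 := by linarith
        positivity
      refine (pow_le_pow_left₀ (by linarith) h2 N).trans ?_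
      rw [← Real.exp_nat_mul]
      apply Real.exp_le_exp.2
      have h3 : N * (m / M) ≤ c := by
        have h4 : (1 - δ) * (1 + ε) = 1 + ε / 2 := by
          rw [hδ]; field_simp; ring
        have h5 : (m:ℝ) / M = 1 / ((1 - δ) * m) := by
          rw [hM]; have : (1 - δ) ≠ 0 := by linarith
          field_simp
        rw [h5, hc, mul_one_div, div_le_div_iff₀ (by nlinarith) (by positivity), ← h4]
        nlinarith
      calc (N:ℝ) * (y * (m/M)) = y * (N * (m/M)) := by ring
        _ ≤ y * c := by gcongr
    calc _ ≤ L * Real.exp (y*c) := by gcongr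
      _ = K := by rw [hL, mul_assoc, ← Real.exp_add]; simp
  have key := cuckoo_moment (ι := ι) (cuS m) (cuD m) m (fun u => by
      convert cuckoo_degree m u) M K L hM0 hK1.le hL1.le hmain l
    Finset.univ {v} (fun _ => Finset.univ) (by
      simp only [Finset.card_univ, Fintype.card_prod, Fintype.card_fin]
      push_cast
      rw [hM]; nlinarith) (fun _ => Or.inl rfl)
  simp only [Fintype.piFinset_univ, Finset.coe_univ, Set.inter_univ, Finset.coe_singleton,
    Finset.card_singleton, pow_one, Finset.prod_const, Finset.card_univ, Fintype.card_prod,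
    Fintype.card_fin] at key
  set A := Finset.univ.filter (fun h : ι → Fin m × Fin m =>
        (gReach (cuS m) (cuD m) (Set.range h) {v}).ncard = k) with hA
  by_cases hk : k ≤ 2 * m
  swap
  · have : A = ∅ := by
      rw [hA, Finset.filter_eq_empty_iff]
      intro h _ heq
      have h1 := Set.ncard_le_ncard (Set.subset_univ
        (gReach (cuS m) (cuD m) (Set.range h) {v})) (Set.toFinite _)
      rw [heq, Set.ncard_univ, Nat.card_eq_fintype_card] at h1
      simp at h1
      omega
    rw [this]
    simp
    positivity
  have h1 : (A.card : ℝ) * L ^ (min l k) ≤ K * ((m:ℝ)^2)^N := by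
    have e : ((m * m : ℕ) : ℝ) ^ N = ((m:ℝ)^2)^N := by push_cast; ring
    rw [← e]
    refine le_trans ?_ key
    rw [← nsmul_eq_mul, ← Finset.sum_const]
    refine le_trans (le_of_eq ?_) (Finset.sum_le_sum_of_subset_of_nonneg (Finset.subset_univ A)
      fun _ _ _ => by positivity)
    apply Finset.sum_congr rfl
    intro h hh
    rw [hA, Finset.mem_filter] at hh
    rw [hh.2]
  have h2 : 1 ≤ L * (L ^ (-(δ/2))) ^ k * L ^ (min l k) := by
    have e : L * (L ^ (-(δ/2))) ^ k * L ^ (min l k)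
        = L ^ ((1:ℝ) + -(δ/2) * k + ((min l k : ℕ) : ℝ)) := by
      rw [Real.rpow_add hL0, Real.rpow_add hL0, Real.rpow_one, Real.rpow_mul hL0.le,
        Real.rpow_natCast, Real.rpow_natCast]
    rw [e]
    · apply Real.one_le_rpow hL1.le
      have hk' : (k:ℝ) ≤ 2 * m := by exact_mod_cast hk
      rw [Nat.cast_min]
      rcases le_total (l:ℝ) k with h | h
      · rw [min_eq_left h]; nlinarith
      · rw [min_eq_right h]; nlinarith [(Nat.cast_nonneg k : (0:ℝ) ≤ k)]
  have hX : (0:ℝ) ≤ A.card := Nat.cast_nonneg _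
  have hP : 0 < L * (L ^ (-(δ/2))) ^ k := by positivity
  calc (A.card : ℝ) ≤ A.card * (L * (L ^ (-(δ/2))) ^ k * L ^ (min l k)) := le_mul_of_one_le_right hX h2
    _ = (L * (L ^ (-(δ/2))) ^ k) * (A.card * L ^ (min l k)) := by ring
    _ ≤ (L * (L ^ (-(δ/2))) ^ k) * (K * ((m:ℝ)^2)^N) := mul_le_mul_of_nonneg_left h1 hP.le
    _ = _ := by ring

theorem cuckoo_spanning {V E ι : Type} [Fintype V] [Fintype ι] (s d : E → V) (h : ι → E) (v : V) :
    ∃ T : Finset ι, gReach s d (Set.image h T) {v} = gReach s d (Set.range h) {v} ∧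
      T.card + 1 ≤ (gReach s d (Set.range h) {v}).ncard := by
  let P : Finset (Finset ι) := Finset.univ.filter
    (fun T => T.card + 1 ≤ (gReach s d (Set.image h T) {v}).ncard)
  have hP : P.Nonempty := by
    refine ⟨∅, ?_⟩
    simp only [P, Finset.mem_filter, Finset.mem_univ, true_and, Finset.card_empty, zero_add]
    apply Nat.one_le_iff_ne_zero.2
    refine (Set.ncard_pos (Set.toFinite _)).2 ?_ |>.ne'
    exact ⟨v, subset_gReach _ _ _ _ rfl⟩
  obtain ⟨T, hT, hmax⟩ := P.exists_max_image Finset.card hP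
  have hT' : T.card + 1 ≤ (gReach s d (Set.image h T) {v}).ncard := by simpa [P] using hT
  have heq : gReach s d (Set.image h T) {v} = gReach s d (Set.range h) {v} := by
    apply (gReach_mono s d {v} (Set.image_subset_range h T)).antisymm
    apply gReach_min _ _ _ _ _ (subset_gReach _ _ _ _)
    rintro _ ⟨x, rfl⟩
    by_contra hne
    have hxT : x ∉ T := fun hx => hne (gReach_edge s d _ _ ⟨x, hx, rfl⟩)
    have hsub : gReach s d (Set.image h T) {v} ⊆ gReach s d (Set.image h (insert x T : Finset ι)) {v} :=
      gReach_mono _ _ _ (Set.image_mono (by simp))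
    have hedge := gReach_edge s d (Set.image h (insert x T : Finset ι)) {v} (e := h x) ⟨x, by simp, rfl⟩
    have hss : gReach s d (Set.image h T) {v} ⊂ gReach s d (Set.image h (insert x T : Finset ι)) {v} := by
      refine hsub.ssubset_of_ne fun he => hne ?_
      rw [he]; exact hedge
    have hlt := Set.ncard_lt_ncard hss (Set.toFinite _)
    have := hmax (insert x T) (by
      simp only [P, Finset.mem_filter, Finset.mem_univ, true_and]
      rw [Finset.card_insert_of_notMem hxT]; omega)
    rw [Finset.card_insert_of_notMem hxT] at this
    omega
  exact ⟨T, heq, heq ▸ hT'⟩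

theorem cuckoo_surplus_fiber (n m t k : ℕ) (v : Fin m ⊕ Fin m) (F : Finset (Fin n))
    (hF : F.card = t) :
    (Finset.univ.filter (fun h : Fin n → Fin m × Fin m =>
      (gReach (cuS m) (cuD m) (Set.image h {x | x ∉ F}) {v}).ncard = k ∧
      ∀ x ∈ F, cuS m (h x) ∈ gReach (cuS m) (cuD m) (Set.image h {x | x ∉ F}) {v} ∧
        cuD m (h x) ∈ gReach (cuS m) (cuD m) (Set.image h {x | x ∉ F}) {v})).card ≤
    (k ^ 2) ^ t * (Finset.univ.filter (fun g : {x // x ∉ F} → Fin m × Fin m =>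
      (gReach (cuS m) (cuD m) (Set.range g) {v}).ncard = k)).card := by
  have hr : ∀ h : Fin n → Fin m × Fin m,
      Set.range (fun x : {x // x ∉ F} => h x) = Set.image h {x | x ∉ F} := by
    intro h; ext e; simp
  apply Finset.card_le_mul_card_image_of_maps_to
    (f := fun (h : Fin n → Fin m × Fin m) (x : {x // x ∉ F}) => h x)
  · intro h hh
    simp only [Finset.mem_filter, Finset.mem_univ, true_and] at hh ⊢
    rw [hr h]; exact hh.1
  · intro g hg
    simp only [Finset.mem_filter, Finset.mem_univ, true_and] at hg
    set R := gReach (cuS m) (cuD m) (Set.range g) {v} with hR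
    let W : Finset (Fin m × Fin m) := Finset.univ.filter (fun e => cuS m e ∈ R ∧ cuD m e ∈ R)
    have hW : W.card ≤ k ^ 2 := by
      have : W.card ≤ (R.toFinset ×ˢ R.toFinset).card := by
        apply Finset.card_le_card_of_injOn (fun e => (cuS m e, cuD m e))
        · intro e he
          simpa [W] using he
        · intro e _ e' _ hee
          simp [cuS, cuD] at hee
          exact Prod.ext hee.1 hee.2
      rw [Finset.card_product, ← Set.ncard_eq_toFinset_card', hg] at this
      rw [sq]; exact this
    have hcard : (Fintype.piFinset (fun _ : {x // x ∈ F} => W)).card ≤ (k^2)^t := by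
      rw [Fintype.card_piFinset]
      simp only [Finset.prod_const, Finset.card_univ, Fintype.card_coe, hF]
      exact Nat.pow_le_pow_left hW t
    refine le_trans ?_ hcard
    apply Finset.card_le_card_of_injOn
      (fun (h : Fin n → Fin m × Fin m) (x : {x // x ∈ F}) => h x)
    · intro h hh
      simp only [Finset.coe_filter, Finset.mem_filter, Finset.mem_univ, true_and,
        Set.mem_ofPred_eq] at hh
      obtain ⟨⟨_, h2⟩, rfl⟩ := hh
      simp only [Finset.mem_coe, Fintype.mem_piFinset]
      intro x
      have := h2 x x.2
      simp only [W, Finset.mem_filter, Finset.mem_univ, true_and]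
      rw [hR, hr h]
      exact this
    · intro h hh h' hh' heq
      simp only [Finset.coe_filter, Finset.mem_filter, Finset.mem_univ, true_and,
        Set.mem_ofPred_eq] at hh hh'
      funext x
      by_cases hx : x ∈ F
      · exact congrFun heq ⟨x, hx⟩
      · exact congrFun (hh.2.trans hh'.2.symm) ⟨x, hx⟩

theorem cuckoo_surplus_exists (n m t : ℕ) (v : Fin m ⊕ Fin m) (h : Fin n → Fin m × Fin m)
    (hB : t ≤ Nat.card {x : Fin n // cuS m (h x) ∈ gReach (cuS m) (cuD m) (Set.range h) {v}} + 1 -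
      (gReach (cuS m) (cuD m) (Set.range h) {v}).ncard) :
    ∃ F : Finset (Fin n), F.card = t ∧
      gReach (cuS m) (cuD m) (Set.image h {x | x ∉ F}) {v} = gReach (cuS m) (cuD m) (Set.range h) {v} ∧
      ∀ x ∈ F, cuS m (h x) ∈ gReach (cuS m) (cuD m) (Set.range h) {v} ∧
        cuD m (h x) ∈ gReach (cuS m) (cuD m) (Set.range h) {v} := by
  obtain ⟨T, hT, hTc⟩ := cuckoo_spanning (cuS m) (cuD m) h v
  set R := gReach (cuS m) (cuD m) (Set.range h) {v} with hR
  let A : Finset (Fin n) := Finset.univ.filter (fun x => cuS m (h x) ∈ R)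
  have hA : Nat.card {x : Fin n // cuS m (h x) ∈ R} = A.card := by
    rw [Nat.card_eq_fintype_card, Fintype.card_subtype]
  rw [hA] at hB
  have h1 := Finset.le_card_sdiff T A
  obtain ⟨F, hFs, hFc⟩ := Finset.exists_subset_card_eq (s := A \ T) (n := t) (by omega)
  refine ⟨F, hFc, ?_, ?_⟩
  · apply (gReach_mono _ _ _ (Set.image_subset_range _ _)).antisymm
    rw [← hR, ← hT]
    apply gReach_mono
    apply Set.image_mono
    intro x hx hxF
    have := hFs hxF
    simp at this
    exact this.2 hx
  · intro x hx
    have := hFs hx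
    simp [A] at this
    exact ⟨this.1, (gReach_edge (cuS m) (cuD m) (Set.range h) {v} ⟨x, rfl⟩).1 this.1⟩

theorem cuckoo_surplus_count (ε C α : ℝ) (hε : 0 < ε) (hC : 1 ≤ C) (hα : 0 < α)
    (hsize : ∀ (m : ℕ) (ι : Type) [Fintype ι] [DecidableEq ι], 0 < m →
      (1 + ε) * Fintype.card ι ≤ m → ∀ (v : Fin m ⊕ Fin m) (k : ℕ),
      ((Finset.univ.filter (fun h : ι → Fin m × Fin m =>
        (gReach (cuS m) (cuD m) (Set.range h) {v}).ncard = k)).card : ℝ)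
        ≤ C * α ^ k * ((m:ℝ) ^ 2) ^ Fintype.card ι)
    (n m : ℕ) (hm : 0 < m) (hn : (1 + ε) * n ≤ m) (v : Fin m ⊕ Fin m) (t k : ℕ) :
    ((Finset.univ.filter (fun h : Fin n → Fin m × Fin m =>
      t ≤ Nat.card {x : Fin n // cuS m (h x) ∈ gReach (cuS m) (cuD m) (Set.range h) {v}} + 1 -
      (gReach (cuS m) (cuD m) (Set.range h) {v}).ncard ∧
      (gReach (cuS m) (cuD m) (Set.range h) {v}).ncard = k)).card : ℝ)
      ≤ min (((k:ℝ)^2 / m)^t) 1 * (C * α ^ k) * ((m:ℝ)^2)^n := by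
  set A := (Finset.univ.filter (fun h : Fin n → Fin m × Fin m =>
      t ≤ Nat.card {x : Fin n // cuS m (h x) ∈ gReach (cuS m) (cuD m) (Set.range h) {v}} + 1 -
      (gReach (cuS m) (cuD m) (Set.range h) {v}).ncard ∧
      (gReach (cuS m) (cuD m) (Set.range h) {v}).ncard = k)) with hA
  have hm' : (0:ℝ) < m := by exact_mod_cast hm
  have hCα : 0 < C * α ^ k := by positivity
  have hb1 : (A.card : ℝ) ≤ 1 * (C * α ^ k) * ((m:ℝ)^2)^n := by
    have := hsize m (Fin n) hm (by simpa using hn) v k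
    rw [Fintype.card_fin] at this
    rw [one_mul]
    refine le_trans ?_ this
    norm_cast
    apply Finset.card_le_card
    intro h hh
    simp only [hA, Finset.mem_filter, Finset.mem_univ, true_and] at hh ⊢
    exact hh.2
  have hb2 : (A.card : ℝ) ≤ ((k:ℝ)^2 / m)^t * (C * α ^ k) * ((m:ℝ)^2)^n := by
    let AF : Finset (Fin n) → Finset (Fin n → Fin m × Fin m) := fun F =>
      (Finset.univ.filter (fun h : Fin n → Fin m × Fin m =>
      (gReach (cuS m) (cuD m) (Set.image h {x | x ∉ F}) {v}).ncard = k ∧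
      ∀ x ∈ F, cuS m (h x) ∈ gReach (cuS m) (cuD m) (Set.image h {x | x ∉ F}) {v} ∧
        cuD m (h x) ∈ gReach (cuS m) (cuD m) (Set.image h {x | x ∉ F}) {v}))
    have hsub : A ⊆ (Finset.powersetCard t Finset.univ).biUnion AF := by
      intro h hh
      simp only [hA, Finset.mem_filter, Finset.mem_univ, true_and] at hh
      obtain ⟨F, h1, h2, h3⟩ := cuckoo_surplus_exists n m t v h hh.1
      simp only [Finset.mem_biUnion, Finset.mem_powersetCard, Finset.subset_univ, true_and]
      refine ⟨F, h1, ?_⟩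
      simp only [AF, Finset.mem_filter, Finset.mem_univ, true_and]
      rw [h2]
      exact ⟨hh.2, h3⟩
    have hAF : ∀ F ∈ Finset.powersetCard t (Finset.univ : Finset (Fin n)),
        ((AF F).card : ℝ) ≤ ((k:ℝ)^2)^t * (C * α ^ k * ((m:ℝ)^2)^(n-t)) := by
      intro F hF
      rw [Finset.mem_powersetCard] at hF
      have h1 := cuckoo_surplus_fiber n m t k v F hF.2
      have hc : Fintype.card {x // x ∉ F} = n - t := by
        rw [Fintype.card_subtype_compl, Fintype.card_fin, Fintype.card_coe, hF.2]
      have h2 := hsize m {x // x ∉ F} hm (by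
        rw [hc]
        have : ((n - t : ℕ) : ℝ) ≤ n := by exact_mod_cast Nat.sub_le _ _
        nlinarith) v k
      rw [hc] at h2
      have h1' : ((AF F).card : ℝ) ≤ ((k:ℝ)^2)^t * ((Finset.univ.filter
        (fun g : {x // x ∉ F} → Fin m × Fin m =>
          (gReach (cuS m) (cuD m) (Set.range g) {v}).ncard = k)).card : ℝ) := by
        exact_mod_cast h1
      exact h1'.trans (mul_le_mul_of_nonneg_left h2 (by positivity))
    have hA1 : (A.card : ℝ) ≤ (n.choose t : ℝ) * (((k:ℝ)^2)^t * (C * α ^ k * ((m:ℝ)^2)^(n-t))) := by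
      have h1 : (A.card : ℝ) ≤ ∑ F ∈ Finset.powersetCard t (Finset.univ : Finset (Fin n)),
          ((AF F).card : ℝ) := by
        exact_mod_cast (Finset.card_le_card hsub).trans Finset.card_biUnion_le
      refine h1.trans ((Finset.sum_le_sum hAF).trans ?_)
      simp
    by_cases htn : t ≤ n
    swap
    · rw [Nat.choose_eq_zero_of_lt (by omega)] at hA1
      simp at hA1
      rw [hA1]; simp; positivity
    have hch : (n.choose t : ℝ) ≤ (m:ℝ)^t := by
      have h1 : (n.choose t : ℝ) ≤ (n:ℝ)^t := by exact_mod_cast Nat.choose_le_pow n t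
      have h2 : (n:ℝ) ≤ m := by nlinarith [(Nat.cast_nonneg n : (0:ℝ) ≤ n)]
      exact h1.trans (pow_le_pow_left₀ (Nat.cast_nonneg _) h2 _)
    refine hA1.trans ((mul_le_mul_of_nonneg_right hch (by positivity)).trans (le_of_eq ?_))
    obtain ⟨r, rfl⟩ := Nat.exists_eq_add_of_le htn
    rw [Nat.add_sub_cancel_left, div_pow, pow_add ((m:ℝ)^2) t r, ← pow_mul (m:ℝ) 2 t, two_mul,
      pow_add (m:ℝ) t t]
    field_simp
  rcases le_total (((k:ℝ)^2 / m)^t) 1 with h | h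
  · rw [min_eq_left h]; exact hb2
  · rw [min_eq_right h]; exact hb1

theorem cuckoo_block (C α : ℝ) (hC : 1 ≤ C) (hα : 0 < α) (hα1 : α < 1) :
    ∃ β : ℝ, 0 < β ∧ β < 1 ∧ ∀ g : ℕ → ℝ, Monotone g → (∀ k, 0 ≤ g k) → (∀ k, g k ≤ 1) →
      ∀ N : ℕ, ∑ k ∈ Finset.range N, g k * (C * α ^ (k+1)) ≤ ∑' k : ℕ, g k * β ^ (k+1) := by
  obtain ⟨P, hP⟩ := exists_nat_ge C
  have hP0 : 0 < P := by
    have : (0:ℝ) < P := by linarith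
    exact_mod_cast this
  have hPr : (0:ℝ) < P := by exact_mod_cast hP0
  set β : ℝ := α ^ (1 / (P:ℝ)) with hβ
  have hβ0 : 0 < β := by positivity
  have hβ1 : β < 1 := Real.rpow_lt_one hα.le hα1 (by positivity)
  have hβP : β ^ P = α := by
    rw [hβ, ← Real.rpow_natCast, ← Real.rpow_mul hα.le]
    field_simp; simp
  refine ⟨β, hβ0, hβ1, fun g hg h0 h1 N => ?_⟩
  have hsum : Summable (fun k : ℕ => g k * β ^ (k+1)) := by
    refine Summable.of_nonneg_of_le (fun k => mul_nonneg (h0 k) (by positivity)) (fun k => ?_)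
      ((summable_geometric_of_lt_one hβ0.le hβ1).mul_left β)
    rw [pow_succ']
    exact mul_le_of_le_one_left (by positivity) (h1 k)
  refine le_trans ?_ (hsum.sum_le_tsum (Finset.range (P * N))
    (fun k _ => mul_nonneg (h0 k) (by positivity)))
  induction N with
  | zero => simp
  | succ N ih =>
    rw [Finset.sum_range_succ, Nat.mul_succ, Finset.sum_range_add]
    apply add_le_add ih
    have : ∀ i ∈ Finset.range P, g N * α ^ (N+1) ≤ g (P * N + i) * β ^ (P * N + i + 1) := by
      intro i hi
      rw [Finset.mem_range] at hi
      apply mul_le_mul (hg _) _ (by positivity) (h0 _)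
      · nlinarith
      · rw [← hβP, ← pow_mul]
        apply pow_le_pow_of_le_one hβ0.le hβ1.le
        rw [Nat.mul_succ]; omega
    calc g N * (C * α ^ (N+1)) ≤ P * (g N * α ^ (N+1)) := by
          have := h0 N
          have h3 : 0 ≤ g N * α^(N+1) := by positivity
          nlinarith
      _ = ∑ i ∈ Finset.range P, g N * α ^ (N+1) := by simp
      _ ≤ _ := Finset.sum_le_sum this

theorem cuckooConn_iff (n m : ℕ) (h : Fin n → Fin m × Fin m) (u v : Fin m ⊕ Fin m) :
    cuckooConn n m (fun x => (h x).1) (fun x => (h x).2) u v ↔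
      u ∈ gReach (cuS m) (cuD m) (Set.range h) {v} := by
  have e : cuckooAdj n m (fun x => (h x).1) (fun x => (h x).2) =
      (fun a b => ∃ e ∈ Set.range h, a = cuS m e ∧ b = cuD m e) := by
    funext a b
    simp [cuckooAdj, cuS, cuD]
  unfold cuckooConn gReach
  rw [e]
  simp only [Set.mem_singleton_iff, exists_eq_left, Set.mem_ofPred_eq]
  exact ⟨fun h => h.symm, fun h => h.symm⟩

theorem cuckooB_eq (n m : ℕ) (h : Fin n → Fin m × Fin m) (v : Fin m ⊕ Fin m) :
    cuckooB n m (fun x => (h x).1) (fun x => (h x).2) v =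
      Nat.card {x : Fin n // cuS m (h x) ∈ gReach (cuS m) (cuD m) (Set.range h) {v}} + 1 -
      (gReach (cuS m) (cuD m) (Set.range h) {v}).ncard := by
  unfold cuckooB cuckooC cuckooV
  simp only [cuckooConn_iff]
  rfl

/-- If `(1+ε)·n ≤ m` then there is a constant `β ∈ (0,1)` depending only on `ε` with
`Pr(B_v ≥ t) ≤ ∑_{k=1}^∞ min((3·e⁵·k³/m)^t, 1) · β^k` for every vertex `v` and `t ≥ 1`.
(The infinite sum over `k ≥ 1` is written as a `tsum` over `ℕ` with `k` shifted by one.) -/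
theorem cuckoo_cyclotomic_tail_series (ε : ℝ) (hε : 0 < ε) :
    ∃ β : ℝ, 0 < β ∧ β < 1 ∧ ∀ n m : ℕ, 0 < n → 0 < m → (1 + ε) * n ≤ m →
      ∀ v : Fin m ⊕ Fin m, ∀ t : ℕ, 1 ≤ t →
        cuckooPr n m (fun ω => t ≤ cuckooB n m ω.1 ω.2 v)
          ≤ ∑' k : ℕ,
              min ((3 * Real.exp 1 ^ 5 * ((k : ℝ) + 1) ^ 3 / m) ^ t) 1 * β ^ (k + 1) := by
  obtain ⟨C, α, hC, hα, hα1, hsize⟩ := cuckoo_size_bound ε hε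
  obtain ⟨β, hβ0, hβ1, hblock⟩ := cuckoo_block C α hC hα hα1
  refine ⟨β, hβ0, hβ1, ?_⟩
  intro n m hn hm hnm v t ht
  have hm' : (0:ℝ) < m := by exact_mod_cast hm
  set g : ℕ → ℝ := fun k => min ((3 * Real.exp 1 ^ 5 * ((k : ℝ) + 1) ^ 3 / m) ^ t) 1 with hg
  have hmono : Monotone g := by
    intro a b hab
    have : (a:ℝ) ≤ b := by exact_mod_cast hab
    simp only [hg]
    gcongr
  have hg0 : ∀ k, 0 ≤ g k := fun k => le_min (by positivity) zero_le_one
  have hg1 : ∀ k, g k ≤ 1 := fun k => min_le_right _ _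
  refine le_trans ?_ (hblock g hmono hg0 hg1 (2 * m))
  have hcard : (Nat.card (HashPair n m) : ℝ) = ((m:ℝ)^2)^n := by
    rw [Nat.card_eq_fintype_card]
    simp only [Fintype.card_prod, Fintype.card_fun, Fintype.card_fin]
    push_cast; ring
  unfold cuckooPr
  rw [hcard, div_le_iff₀ (by positivity)]
  let R : (Fin n → Fin m × Fin m) → Set (Fin m ⊕ Fin m) := fun h =>
    gReach (cuS m) (cuD m) (Set.range h) {v}
  let A : Finset (Fin n → Fin m × Fin m) := Finset.univ.filter (fun h =>
    t ≤ Nat.card {x : Fin n // cuS m (h x) ∈ R h} + 1 - (R h).ncard)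
  let B : ℕ → Finset (Fin n → Fin m × Fin m) := fun k => Finset.univ.filter (fun h =>
    t ≤ Nat.card {x : Fin n // cuS m (h x) ∈ R h} + 1 - (R h).ncard ∧ (R h).ncard = k)
  have hA : Nat.card {ω : HashPair n m // t ≤ cuckooB n m ω.1 ω.2 v} = A.card := by
    rw [← Fintype.card_coe, ← Nat.card_eq_fintype_card]
    symm
    apply Nat.card_congr
    refine (Equiv.arrowProdEquivProdArrow (Fin n) (fun _ => Fin m) (fun _ => Fin m)).subtypeEquiv ?_
    intro h
    simp only [A, Finset.mem_filter, Finset.mem_univ, true_and, R]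
    rw [← cuckooB_eq]
    rfl
  have hsub : A ⊆ (Finset.range (2 * m)).biUnion (fun k => B (k+1)) := by
    intro h hh
    simp only [A, Finset.mem_filter, Finset.mem_univ, true_and] at hh
    have h1 : 0 < (R h).ncard :=
      (Set.ncard_pos (Set.toFinite _)).2 ⟨v, subset_gReach _ _ _ _ rfl⟩
    have h2 : (R h).ncard ≤ 2 * m := by
      have := Set.ncard_le_ncard (Set.subset_univ (R h)) (Set.toFinite _)
      rw [Set.ncard_univ, Nat.card_eq_fintype_card] at this
      simp at this
      omega
    simp only [Finset.mem_biUnion, Finset.mem_range]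
    refine ⟨(R h).ncard - 1, by omega, ?_⟩
    simp only [B, Finset.mem_filter, Finset.mem_univ, true_and]
    exact ⟨hh, by omega⟩
  rw [hA, Finset.sum_mul]
  have h1 : (A.card : ℝ) ≤ ∑ k ∈ Finset.range (2 * m), ((B (k+1)).card : ℝ) := by
    exact_mod_cast (Finset.card_le_card hsub).trans Finset.card_biUnion_le
  refine h1.trans (Finset.sum_le_sum fun k _ => ?_)
  have h2 := cuckoo_surplus_count ε C α hε hC hα hsize n m hm hnm v t (k+1)
  refine h2.trans ?_
  have hexp : (1:ℝ) ≤ 3 * Real.exp 1 ^ 5 := by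
    have := one_le_pow₀ (Real.one_le_exp zero_le_one) (n := 5)
    linarith
  have hk : ((k+1 : ℕ) : ℝ)^2 ≤ 3 * Real.exp 1 ^ 5 * ((k : ℝ) + 1) ^ 3 := by
    push_cast
    have h3 : ((k:ℝ)+1)^2 ≤ ((k:ℝ)+1)^3 := pow_le_pow_right₀ (by
      have := (Nat.cast_nonneg k : (0:ℝ) ≤ k); linarith) (by norm_num)
    have : (0:ℝ) ≤ ((k:ℝ)+1)^3 := by positivity
    nlinarith
  have hle : min ((((k+1 : ℕ) : ℝ)^2 / m)^t) 1 ≤ g k := by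
    simp only [hg]
    gcongr
  gcongr
end
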